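/- Fix a prime p and an integer n ≥ 1, set e_n = p^n − 1, and fix an algebraic closure Ω of ℚ_p. Let K ⊆ Ω be a finite extension of ℚ_p of degree d = [K : ℚ_p], let K_n = K(ζ) where ζ ∈ Ω is a primitive e_n-th root of unity, let L_n ⊆ Ω be the field generated over K_n by all x ∈ Ω with x^{e_n} ∈ K_n, and let G_n = Gal(L_n / K). Then there is an isomorphism of F_p[G_n]-modules between the quotient group L_n^× / (L_n^×)^p (with the G_n-action induced by the Galois action) and the direct sum μ_p(L_n) ⊕ F_p[G_n]^d ⊕ F_p, where μ_p(L_n) is the group of p-th roots of unity in L_n with its natural G_n-action, F_p[G_n] is the group algebra with G_n acting by left multiplication, and G_n acts trivially on the last summand F_p. -/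

import Mathlib

/-!
Let `O` be the ring of integers of `L`, with uniformizer `π` and residue field `l`, and let
`θ(g)` be the residue class of `g π / π`, a cocycle of the Galois group `G`. An element `lam` of `L`
with `lam ^ (p - 1) = -p` exists; write `lam ~ π ^ E`.

Filter the `p`-th power classes of units of `O` by congruence modulo `π ^ i`. For `i < p E` the step
is trivial when `p ∣ i`, and otherwise it is `l(i)`, the residue field twisted by `θ ^ i`. At `p E`
the Artin–Schreier map controls which units `1 + lam ^ p x` are `p`-th powers, and what remains is
`μ_p(L)`.

Galois descent counts homomorphisms: over `(p - 1) E` consecutive `i`, the numbers of homomorphisms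
`X → l(i)` multiply to the number of homomorphisms `X → 𝔽_p[G] ^ d`. By Lovász's cancellation the
sum of such a block of twists is free of rank `d`, so each `l(i)` is projective and the filtration
splits. Frobenius gives `l(i) ≅ l(p i)`, which turns the product over the indices below `p E` prime
to `p` into one over consecutive indices. Hence the unit part is `μ_p(L) ⊕ 𝔽_p[G] ^ d`.

The inertia group of `L / K` has order prime to `p`. So a uniformizer of `K` has valuation prime to
`p` in `L`, and it spans the summand `𝔽_p`.
-/

universe u v

open Finset

section HomCounting

variable {R : Type*} [Ring R]

theorem natCard_linearMap_congr {A B : Type*} [AddCommGroup A] [Module R A]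
    [AddCommGroup B] [Module R B] (e : A ≃ₗ[R] B) (X : Type*) [AddCommGroup X] [Module R X] :
    Nat.card (X →ₗ[R] A) = Nat.card (X →ₗ[R] B) :=
  Nat.card_congr ((LinearEquiv.refl R X).arrowCongrAddEquiv e).toEquiv

theorem natCard_linearMap_prod (X A B : Type*) [AddCommGroup X] [Module R X]
    [AddCommGroup A] [Module R A] [AddCommGroup B] [Module R B] :
    Nat.card (X →ₗ[R] A × B) = Nat.card (X →ₗ[R] A) * Nat.card (X →ₗ[R] B) := by
  rw [← Nat.card_prod]
  exact Nat.card_congr (LinearMap.prodEquiv ℕ).toEquiv.symm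

theorem natCard_linearMap_pi {ι : Type*} [Fintype ι] (X : Type*) [AddCommGroup X] [Module R X]
    (A : ι → Type*) [∀ i, AddCommGroup (A i)] [∀ i, Module R (A i)] :
    Nat.card (X →ₗ[R] ∀ i, A i) = ∏ i, Nat.card (X →ₗ[R] A i) := by
  rw [← Nat.card_pi]
  exact Nat.card_congr
    { toFun f i := LinearMap.proj i ∘ₗ f
      invFun := LinearMap.pi }

instance finite_linearMap {X A : Type*} [AddCommGroup X] [Module R X] [Finite X]
    [AddCommGroup A] [Module R A] [Finite A] : Finite (X →ₗ[R] A) :=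
  DFunLike.finite _

theorem natCard_linearMap_ker_eq {X A : Type*} [AddCommGroup X] [Module R X]
    [AddCommGroup A] [Module R A] (N : Submodule R X) :
    Nat.card {f : X →ₗ[R] A // LinearMap.ker f = N} =
      Nat.card {f : (X ⧸ N) →ₗ[R] A // LinearMap.ker f = ⊥} :=
  Nat.card_congr
    { toFun f := ⟨N.liftQ f f.2.ge, Submodule.ker_liftQ_eq_bot _ _ _ f.2.le⟩
      invFun g := ⟨g.1 ∘ₗ N.mkQ, by
        rw [LinearMap.ker_comp, g.2, Submodule.comap_bot, Submodule.ker_mkQ]⟩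
      left_inv f := Subtype.ext (N.liftQ_mkQ f.1 f.2.ge)
      right_inv g := Subtype.ext (Submodule.linearMap_qext _ (N.liftQ_mkQ _ _)) }

theorem natCard_linearMap_eq_sum_ker {X A : Type*} [AddCommGroup X] [Module R X] [Finite X]
    [AddCommGroup A] [Module R A] [Finite A] [Fintype (Submodule R X)] :
    Nat.card (X →ₗ[R] A) =
      ∑ N : Submodule R X, Nat.card {f : X →ₗ[R] A // LinearMap.ker f = N} := by
  rw [← Nat.card_sigma, Nat.card_congr (Equiv.sigmaFiberEquiv LinearMap.ker)]

theorem natCard_quotient_lt {X : Type*} [AddCommGroup X] [Module R X] [Finite X]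
    {N : Submodule R X} (hN : N ≠ ⊥) : Nat.card (X ⧸ N) < Nat.card X := by
  have : Nontrivial N := Submodule.nontrivial_iff_ne_bot.2 hN
  have : Finite (X ⧸ N) := Finite.of_surjective _ N.mkQ_surjective
  rw [Submodule.card_eq_card_quotient_mul_card N, mul_comm]
  exact lt_mul_of_one_lt_right Nat.card_pos Finite.one_lt_card

variable {A B : Type u} [AddCommGroup A] [Module R A] [Finite A]
  [AddCommGroup B] [Module R B] [Finite B]

theorem natCard_linearMap_ker_eq_bot_congr
    (h : ∀ (X : Type u) [AddCommGroup X] [Module R X] [Finite X],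
      Nat.card (X →ₗ[R] A) = Nat.card (X →ₗ[R] B))
    (X : Type u) [AddCommGroup X] [Module R X] [Finite X] :
    Nat.card {f : X →ₗ[R] A // LinearMap.ker f = ⊥} =
      Nat.card {f : X →ₗ[R] B // LinearMap.ker f = ⊥} := by
  classical
  induction hn : Nat.card X using Nat.strong_induction_on generalizing X with
  | _ n ih =>
    have : Finite (Submodule R X) := Finite.of_injective _ SetLike.coe_injective
    have : Fintype (Submodule R X) := Fintype.ofFinite _
    have hX := h X
    rw [natCard_linearMap_eq_sum_ker, natCard_linearMap_eq_sum_ker,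
      ← add_sum_erase _ _ (mem_univ ⊥), ← add_sum_erase _ _ (mem_univ ⊥)] at hX
    refine Nat.add_right_cancel (hX.trans (congrArg _ (sum_congr rfl fun N hN ↦ ?_)))
    have : Finite (X ⧸ N) := Finite.of_surjective _ N.mkQ_surjective
    rw [natCard_linearMap_ker_eq N, natCard_linearMap_ker_eq N]
    exact (ih _ (hn ▸ natCard_quotient_lt (ne_of_mem_erase hN)) (X ⧸ N) rfl).symm

/- Lovász's cancellation argument: equal hom counts force equal counts of injections, so each of
the two modules embeds into the other. -/
theorem nonempty_linearEquiv_of_natCard_linearMap_eq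
    (h : ∀ (X : Type u) [AddCommGroup X] [Module R X] [Finite X],
      Nat.card (X →ₗ[R] A) = Nat.card (X →ₗ[R] B)) : Nonempty (A ≃ₗ[R] B) := by
  have hAB := natCard_linearMap_ker_eq_bot_congr h
  have nonempty_self (C : Type u) [AddCommGroup C] [Module R C] [Finite C] :
      0 < Nat.card {f : C →ₗ[R] C // LinearMap.ker f = ⊥} :=
    Finite.card_pos_iff.2 ⟨⟨LinearMap.id, LinearMap.ker_id⟩⟩
  obtain ⟨f, hf⟩ := (Finite.card_pos_iff.1 ((nonempty_self A).trans_eq (hAB A)))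
  obtain ⟨g, hg⟩ := (Finite.card_pos_iff.1 ((nonempty_self B).trans_eq (hAB B).symm))
  rw [LinearMap.ker_eq_bot] at hf hg
  exact ⟨LinearEquiv.ofBijective f ((Nat.bijective_iff_injective_and_card f).2
    ⟨hf, (Nat.card_le_card_of_injective f hf).antisymm (Nat.card_le_card_of_injective g hg)⟩)⟩

end HomCounting

section Filtration

variable {R M : Type*} [Ring R] [AddCommGroup M] [Module R M]

theorem nonempty_linearEquiv_prod_of_projective {V : Type*} [AddCommGroup V] [Module R V]
    [Module.Projective R V] {F F' : Submodule R M} (hle : F' ≤ F) (q : F →ₗ[R] V)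
    (hq : Function.Surjective q) (hker : ∀ x : F, q x = 0 ↔ (x : M) ∈ F') :
    Nonempty (F ≃ₗ[R] F' × V) := by
  obtain ⟨s, hs⟩ := Module.projective_lifting_property q LinearMap.id hq
  have hexact : Function.Exact (Submodule.inclusion hle) q := fun x ↦ by
    rw [hker, ← LinearMap.coe_range, SetLike.mem_coe, Submodule.range_inclusion,
      Submodule.mem_comap, Submodule.subtype_apply]
  exact ⟨(hexact.splitSurjectiveEquiv (Submodule.inclusion_injective hle) ⟨s, hs⟩).1⟩

variable (F : ℕ → Submodule R M) (V : ℕ → Type*) [∀ i, AddCommGroup (V i)]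
  [∀ i, Module R (V i)] (S : ℕ → Prop) (n : ℕ) (heq : ∀ i < n, ¬ S i → F i = F (i + 1))
  (hsplit : ∀ i < n, S i → Nonempty (F i ≃ₗ[R] F (i + 1) × V i))

include heq hsplit

theorem finite_of_filtration [∀ i, Finite (V i)] (hn : Finite (F n)) : Finite (F 0) := by
  induction n with
  | zero => exact hn
  | succ n ih =>
    have hFn : Finite (F n) := by
      by_cases hS : S n
      · exact Finite.of_equiv _ (hsplit n (by lia) hS).some.symm.toEquiv
      · rwa [heq n (by lia) hS]
    exact ih (fun i hi ↦ heq i (by lia)) (fun i hi ↦ hsplit i (by lia)) hFn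

theorem natCard_linearMap_filtration [DecidablePred S] (X : Type*) [AddCommGroup X]
    [Module R X] :
    Nat.card (X →ₗ[R] F 0) =
      Nat.card (X →ₗ[R] F n) * ∏ i ∈ range n with S i, Nat.card (X →ₗ[R] V i) := by
  induction n with
  | zero => simp
  | succ n ih =>
    rw [ih (fun i hi ↦ heq i (by lia)) (fun i hi ↦ hsplit i (by lia)), range_add_one,
      filter_insert]
    by_cases hS : S n
    · obtain ⟨e⟩ := hsplit n (by lia) hS
      rw [if_pos hS, prod_insert (by simp), natCard_linearMap_congr e, natCard_linearMap_prod,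
        mul_assoc]
    · rw [if_neg hS, heq n (by lia) hS]

end Filtration

section Descent

open Representation

theorem exists_dual_bases_of_faithfulSMul (C k : Type*) [Group C] [Fintype C] [DecidableEq C]
    [Field k] [MulSemiringAction C k] [FaithfulSMul C k] :
    ∃ b b' : C → k, (∀ i j, ∑ s : C, s • (b' i * b j) = if i = j then 1 else 0) ∧
      ∀ s : C, ∑ j, b j * s • b' j = if s = 1 then 1 else 0 := by
  have : IsGalois (FixedPoints.subfield C k) k := IsGalois.of_fixed_field k C
  let b : Module.Basis C (FixedPoints.subfield C k) k :=
    (Module.finBasisOfFinrankEq _ _ (FixedPoints.finrank_eq_card C k)).reindex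
      (Fintype.equivFin C).symm
  let b' := (Algebra.traceForm (FixedPoints.subfield C k) k).dualBasis
    (traceForm_nondegenerate _ _) b
  have hdual (i j) : ∑ s : C, s • (b' i * b j) = if i = j then 1 else 0 := by
    have htrace : algebraMap (FixedPoints.subfield C k) k (Algebra.trace _ k (b' i * b j)) =
        ∑ s : C, s • (b' i * b j) := by
      rw [trace_eq_sum_automorphisms, ← Equiv.sum_comp (FixedPoints.toAlgAutMulEquiv C k).toEquiv]
      rfl
    rw [← htrace, ← Algebra.traceForm_apply, LinearMap.BilinForm.apply_dualBasis_left]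
    simp only [eq_comm, apply_ite (algebraMap _ k), map_one, map_zero]
  have hNM : (Matrix.of fun i s ↦ s • b' i) * (Matrix.of fun s j ↦ s • b j) =
      (1 : Matrix C C k) := by
    ext i j
    simp only [Matrix.mul_apply, Matrix.one_apply, ← hdual i j, Matrix.of_apply, smul_mul']
  refine ⟨b, b', hdual, fun s ↦ ?_⟩
  have hMN := Matrix.ext_iff.mpr (mul_eq_one_comm.mp hNM) 1 s
  simpa only [Matrix.mul_apply, Matrix.one_apply, Matrix.of_apply, one_smul, eq_comm] using hMN

variable {F G k Y : Type*} [CommRing F] [Group G] [Finite G] [Field k] [MulSemiringAction G k]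
  [AddCommGroup Y] [Module F Y] [Module k Y]

theorem natCard_invariants_pow_card [FaithfulSMul G k] (ρ : Representation F G Y)
    (hρ : ∀ (g : G) (a : k) (y : Y), ρ g (a • y) = (g • a) • ρ g y) :
    Nat.card ρ.invariants ^ Nat.card G = Nat.card Y := by
  classical
  have : Fintype G := Fintype.ofFinite G
  obtain ⟨b, b', hdual, horth⟩ := exists_dual_bases_of_faithfulSMul G k
  let e : (G → ρ.invariants) ≃ Y :=
    { toFun f := ∑ j, b j • (f j : Y)
      invFun y j := ⟨∑ s, ρ s (b' j • y), fun g ↦ by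
        simp_rw [map_sum, ← Module.End.mul_apply, ← map_mul]
        exact Fintype.sum_equiv (Equiv.mulLeft g) _ _ fun _ ↦ rfl⟩
      left_inv f := funext fun i ↦ Subtype.ext <| by
        simp_rw [smul_sum, smul_smul, map_sum]
        rw [sum_comm]
        simp_rw [hρ, (f _).2 _, ← sum_smul, hdual, ite_smul, one_smul, zero_smul, sum_ite_eq,
          mem_univ, if_true]
      right_inv y := by
        simp_rw [hρ, smul_sum, smul_smul]
        rw [sum_comm]
        simp_rw [← sum_smul, horth, ite_smul, one_smul, zero_smul, sum_ite_eq', mem_univ,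
          if_true, map_one, Module.End.one_apply] }
  rw [← Nat.card_congr e, Nat.card_fun]

/-- The vectors fixed by the kernel of `G → Aut k` under a semilinear representation; they form a
`k`-subspace since that kernel acts `k`-linearly. -/
noncomputable def kerInvariants (ρ : Representation F G Y)
    (hρ : ∀ (g : G) (a : k) (y : Y), ρ g (a • y) = (g • a) • ρ g y) : Submodule k Y where
  __ := (invariants (ρ.comp (MulSemiringAction.toRingAut G k).ker.subtype)).toAddSubmonoid
  smul_mem' a y hy := fun g : (MulSemiringAction.toRingAut G k).ker ↦ by
    have hg : (g : G) • a = a := RingEquiv.congr_fun g.2 a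
    exact (hρ g a y).trans (congrArg₂ _ hg (hy g))

theorem natCard_invariants_pow_index (ρ : Representation F G Y)
    (hρ : ∀ (g : G) (a : k) (y : Y), ρ g (a • y) = (g • a) • ρ g y) :
    Nat.card ρ.invariants ^ (MulSemiringAction.toRingAut G k).ker.index =
      Nat.card (kerInvariants ρ hρ) := by
  let φ := MulSemiringAction.toRingAut G k
  let : MulSemiringAction (G ⧸ φ.ker) k :=
    MulSemiringAction.compHom k (QuotientGroup.kerLift φ)
  have : FaithfulSMul (G ⧸ φ.ker) k :=
    ⟨fun h ↦ QuotientGroup.kerLift_injective φ (RingEquiv.ext h)⟩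
  let : Module k (invariants (ρ.comp φ.ker.subtype)) := (kerInvariants ρ hρ).module
  have hcard := natCard_invariants_pow_card (k := k) (quotientToInvariants ρ φ.ker) <| by
    rintro ⟨g⟩ a y
    exact Subtype.ext (hρ g a y)
  refine Eq.trans (congrArg (· ^ _) (Nat.card_congr ?_)) hcard
  exact
    { toFun y := ⟨⟨y.1, fun g ↦ y.2 g⟩, by rintro ⟨g⟩; exact Subtype.ext (y.2 g)⟩
      invFun y := ⟨y.1.1, fun g ↦ congrArg Subtype.val (y.2 (QuotientGroup.mk g))⟩ }

end Descent

section Eigenspaces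

open Polynomial Module

variable {k Y : Type*} [Field k] [AddCommGroup Y] [Module k Y] [FiniteDimensional k Y]

theorem finrank_ker_aeval_prod_X_sub_C (T : End k Y) (s : Finset k) :
    finrank k (LinearMap.ker (aeval T (∏ c ∈ s, (X - C c)))) =
      ∑ c ∈ s, finrank k (T.eigenspace c) := by
  classical
  induction s using Finset.induction_on with
  | empty =>
    rw [prod_empty, map_one, End.one_eq_id, LinearMap.ker_id, finrank_bot, sum_empty]
  | insert c s hc ih =>
    have hcoprime : IsCoprime (X - C c) (∏ c ∈ s, (X - C c)) :=
      IsCoprime.prod_right fun d hd ↦ isCoprime_X_sub_C_of_isUnit_sub <|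
        (sub_ne_zero.2 (ne_of_mem_of_not_mem hd hc).symm).isUnit
    have hadd := Submodule.finrank_sup_add_finrank_inf_eq
      (LinearMap.ker (aeval T (X - C c))) (LinearMap.ker (aeval T (∏ c ∈ s, (X - C c))))
    rw [(disjoint_ker_aeval_of_isCoprime T hcoprime).eq_bot, finrank_bot, add_zero,
      sup_ker_aeval_eq_ker_aeval_mul_of_coprime T hcoprime] at hadd
    rw [prod_insert hc, sum_insert hc, ← ih, hadd, End.eigenspace_def, map_sub, aeval_X, aeval_C,
      Algebra.algebraMap_eq_smul_one]

theorem sum_finrank_eigenspace_pow (T : End k Y) {t : ℕ} (ht : 0 < t) {w : k}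
    (hw : IsPrimitiveRoot w t) (hT : T ^ t = 1) :
    ∑ i ∈ range t, finrank k (T.eigenspace (w ^ i)) = finrank k Y := by
  classical
  have hinj : Set.InjOn (fun i ↦ w ^ i) (range t) := fun i hi j hj hij ↦
    hw.pow_inj (mem_range.1 hi) (mem_range.1 hj) hij
  have hroots : (range t).image (fun i ↦ w ^ i) = nthRootsFinset t 1 := by
    refine eq_of_subset_of_card_le (image_subset_iff.2 fun i _ ↦ ?_) ?_
    · rw [mem_nthRootsFinset ht, ← pow_mul, mul_comm, pow_mul, hw.pow_eq_one, one_pow]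
    · rw [card_image_of_injOn hinj, hw.card_nthRootsFinset, card_range]
  have hzero : aeval T (X ^ t - 1 : k[X]) = 0 := by simp [hT]
  rw [← sum_image (f := fun c ↦ finrank k (T.eigenspace c)) hinj, hroots,
    ← finrank_ker_aeval_prod_X_sub_C, ← X_pow_sub_one_eq_prod ht hw, hzero, LinearMap.ker_zero,
    finrank_top]

end Eigenspaces

section Sums

theorem sum_range_add_of_periodic {h : ℕ → ℕ} {t : ℕ} (hper : h.Periodic t) (a : ℕ) :
    ∑ i ∈ range t, h (a + i) = ∑ i ∈ range t, h i := by
  have hmod := congrArg (fun s ↦ (s.map h).sum) (Nat.multiset_Ico_map_mod a t)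
  simp only [Multiset.map_map, Function.comp_def, hper.map_mod_nat] at hmod
  simpa only [sum_Ico_eq_sum_range, Nat.add_sub_cancel_left] using!
    show ∑ i ∈ Ico a (a + t), h i = ∑ i ∈ range t, h i from hmod

theorem sum_range_mul_add_of_periodic {h : ℕ → ℕ} {t : ℕ} (hper : h.Periodic t) (m a : ℕ) :
    ∑ i ∈ range (t * m), h (a + i) = m * ∑ i ∈ range t, h i := by
  induction m with
  | zero => simp
  | succ m ih =>
    rw [Nat.mul_succ, sum_range_add, ih]
    simp_rw [← add_assoc]
    rw [sum_range_add_of_periodic hper, Nat.succ_mul]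

theorem prod_filter_not_dvd_eq_prod_range_add {p : ℕ} (hp : 0 < p) (E : ℕ) {N : ℕ → ℕ}
    (hN : ∀ i, 0 < N i) (hmul : ∀ i, N (p * i) = N i) :
    ∏ i ∈ range (p * E) with ¬ p ∣ i, N i = ∏ i ∈ range ((p - 1) * E), N (E + i) := by
  have hmultiples : {i ∈ range (p * E) | p ∣ i} = (range E).image (p * ·) := by
    ext i
    simp only [mem_filter, mem_range, mem_image]
    constructor
    · rintro ⟨hi, j, rfl⟩
      exact ⟨j, Nat.lt_of_mul_lt_mul_left hi, rfl⟩
    · rintro ⟨j, hj, rfl⟩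
      exact ⟨Nat.mul_lt_mul_of_pos_left hj hp, dvd_mul_right _ _⟩
  have hprod : ∏ i ∈ range (p * E) with p ∣ i, N i = ∏ i ∈ range E, N i := by
    rw [hmultiples, prod_image fun a _ b _ hab ↦ Nat.eq_of_mul_eq_mul_left hp hab]
    exact prod_congr rfl fun i _ ↦ hmul i
  refine Nat.eq_of_mul_eq_mul_left (prod_pos fun i (_ : i ∈ range E) ↦ hN i) ?_
  rw [← prod_range_add, ← hprod, prod_filter_mul_prod_filter_not, ← one_add_mul,
    add_tsub_cancel_of_le (show 1 ≤ p from hp)]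

end Sums

section Hom

open Representation Module

variable {F G X : Type*} [Field F] [Group G] [AddCommGroup X] [Module F X]
  (π : Representation F G X)

theorem natCard_linearMap_asModule {Y : Type*} [AddCommGroup Y] [Module F Y]
    (ρ : Representation F G Y) :
    Nat.card (π.asModule →ₗ[MonoidAlgebra F G] ρ.asModule) = Nat.card (linHom π ρ).invariants :=
  (Nat.card_congr ((invariantsEquivIntertwiningMap π ρ).toEquiv.trans
    (IntertwiningMap.equivLinearMapAsModule π ρ).toEquiv)).symm

/-- Precomposition with `π g` on the `k`-space of `F`-linear maps `X → k`. -/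
noncomputable def precomp (k : Type*) [Field k] [Algebra F k] (π : Representation F G X) (g : G) :
    End k (X →ₗ[F] k) :=
  LinearMap.lcomp k k (π g)

theorem precomp_pow (k : Type*) [Field k] [Algebra F k] (g : G) (n : ℕ) :
    precomp k π g ^ n = precomp k π (g ^ n) := by
  induction n with
  | zero => ext; simp [precomp]
  | succ n ih => rw [pow_succ, ih, pow_succ']; ext; simp [precomp]

end Hom

section Twist

open Representation Module

variable {F G k X : Type*} [Field F] [Group G] [Field k] [Algebra F k]
  [MulSemiringAction G k] [SMulCommClass G F k] {θ : G → kˣ}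

/-- A 1-cocycle of `G` with values in the units of a field `k` with `G`-action:
`θ(gh) = θ(g) · g(θ(h))`. -/
def IsUnitCocycle (θ : G → kˣ) : Prop :=
  ∀ g h, (θ (g * h) : k) = θ g * g • (θ h : k)

theorem IsUnitCocycle.map_one (hθ : IsUnitCocycle θ) : (θ 1 : k) = 1 := by
  have h := hθ 1 1
  rw [mul_one, one_smul] at h
  exact (mul_eq_left₀ (θ 1).ne_zero).1 h.symm

/-- The representation `g • x = θ(g)ⁱ · g(x)` on a field `k` with `G`-action, where `θ` is a
1-cocycle with values in `kˣ`. For a local field these are the graded pieces of the unit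
filtration. -/
noncomputable def twist (F : Type*) [Field F] [Algebra F k] [SMulCommClass G F k]
    (hθ : IsUnitCocycle θ) (i : ℕ) : Representation F G k where
  toFun g := LinearMap.mulLeft F ((θ g : k) ^ i) ∘ₗ DistribSMul.toLinearMap F k g
  map_one' := LinearMap.ext fun x ↦ by simp [hθ.map_one]
  map_mul' g h := LinearMap.ext fun x ↦ by
    simp [hθ g h, mul_pow, smul_mul', mul_smul]

variable (hθ : IsUnitCocycle θ) (i : ℕ)

@[simp]
theorem twist_apply (g : G) (x : k) : twist F hθ i g x = (θ g : k) ^ i * g • x := rfl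

theorem IsUnitCocycle.exists_generator_isPrimitiveRoot [Finite G] (hθ : IsUnitCocycle θ)
    (hinj : ∀ g ∈ (MulSemiringAction.toRingAut G k).ker, θ g = 1 → g = 1) :
    ∃ τ : (MulSemiringAction.toRingAut G k).ker, (∀ g, g ∈ Subgroup.zpowers τ) ∧
      τ ^ Nat.card (MulSemiringAction.toRingAut G k).ker = 1 ∧
      IsPrimitiveRoot (θ τ : k) (Nat.card (MulSemiringAction.toRingAut G k).ker) := by
  let I := (MulSemiringAction.toRingAut G k).ker
  let χ : I →* k :=
    { toFun g := θ g
      map_one' := hθ.map_one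
      map_mul' g h := (hθ g h).trans (congrArg _ (RingEquiv.congr_fun g.2 _)) }
  have hχ : Function.Injective χ := fun g h hgh ↦
    (injective_iff_map_eq_one χ.toHomUnits).2
      (fun g hg ↦ Subtype.ext (hinj g g.2 (Units.ext (congrArg Units.val hg :)))) (Units.ext hgh)
  have : IsCyclic I := isCyclic_of_injective_ringHom χ hχ
  obtain ⟨τ, hτ⟩ := IsCyclic.exists_generator (α := I)
  refine ⟨τ, hτ, pow_card_eq_one', ?_⟩
  rw [← orderOf_eq_card_of_forall_mem_zpowers hτ, ← orderOf_injective χ hχ]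
  exact IsPrimitiveRoot.orderOf (χ τ)

section Hom

variable [AddCommGroup X] [Module F X] (π : Representation F G X)

theorem linHom_twist_apply_apply (g : G) (f : X →ₗ[F] k) (x : X) :
    linHom π (twist F hθ i) g f x = (θ g : k) ^ i * g • f (π g⁻¹ x) := rfl

theorem linHom_twist_smul (g : G) (a : k) (f : X →ₗ[F] k) :
    linHom π (twist F hθ i) g (a • f) = (g • a) • linHom π (twist F hθ i) g f := by
  ext x
  simp only [linHom_twist_apply_apply, LinearMap.smul_apply, smul_eq_mul, smul_mul',
    mul_left_comm]

theorem linHom_twist_eq_self_iff {g : G} (hg : ∀ a : k, g • a = a) (f : X →ₗ[F] k) :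
    linHom π (twist F hθ i) g f = f ↔ precomp k π g f = (θ g : k) ^ i • f := by
  simp only [LinearMap.ext_iff, linHom_twist_apply_apply, hg]
  constructor
  · intro h x
    simpa [precomp] using (h (π g x)).symm
  · intro h x
    simpa [precomp] using (h (π g⁻¹ x)).symm

theorem kerInvariants_linHom_twist [Finite G] {τ : (MulSemiringAction.toRingAut G k).ker}
    (hτ : ∀ g, g ∈ Subgroup.zpowers τ) :
    kerInvariants (linHom π (twist F hθ i)) (linHom_twist_smul hθ i π) =
      (precomp k π (τ : G)).eigenspace ((θ τ : k) ^ i) := by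
  ext f
  rw [End.mem_eigenspace_iff, ← linHom_twist_eq_self_iff hθ i π (RingEquiv.congr_fun τ.2)]
  refine ⟨fun h ↦ h τ, fun h g ↦ ?_⟩
  obtain ⟨j, rfl⟩ := mem_powers_iff_mem_zpowers.2 (hτ g)
  rw [map_pow, End.pow_apply]
  exact Function.IsFixedPt.iterate h j

variable [Finite G] [Finite k] [Finite X]

theorem natCard_linearMap_twist_pow_index {τ : (MulSemiringAction.toRingAut G k).ker}
    (hτ : ∀ g, g ∈ Subgroup.zpowers τ) :
    Nat.card (π.asModule →ₗ[MonoidAlgebra F G] (twist F hθ i).asModule) ^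
        (MulSemiringAction.toRingAut G k).ker.index =
      Nat.card k ^ finrank k ((precomp k π (τ : G)).eigenspace ((θ τ : k) ^ i)) := by
  have : Finite (X →ₗ[F] k) := Finite.of_injective _ DFunLike.coe_injective
  rw [natCard_linearMap_asModule, natCard_invariants_pow_index _ (linHom_twist_smul hθ i π),
    kerInvariants_linHom_twist hθ i π hτ, natCard_eq_pow_finrank (K := k)]

theorem prod_natCard_asModule_linearMap_twist
    (hinj : ∀ g ∈ (MulSemiringAction.toRingAut G k).ker, θ g = 1 → g = 1) {e d : ℕ}
    (he : ∀ g ∈ (MulSemiringAction.toRingAut G k).ker, θ g ^ e = 1)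
    (hcard : Nat.card k ^ e = Nat.card F ^ (d * Nat.card G)) (b : ℕ) :
    ∏ i ∈ range e,
      Nat.card (π.asModule →ₗ[MonoidAlgebra F G] (twist F hθ (b + i)).asModule) =
      Nat.card X ^ d := by
  let I := (MulSemiringAction.toRingAut G k).ker
  have : Finite (X →ₗ[F] k) := Finite.of_injective _ DFunLike.coe_injective
  obtain ⟨τ, hτ, hτcard, hroot⟩ := hθ.exists_generator_isPrimitiveRoot hinj
  obtain ⟨m, rfl⟩ : Nat.card I ∣ e :=
    hroot.dvd_of_pow_eq_one _ (by rw [← Units.val_pow_eq_pow_val, he τ τ.2, Units.val_one])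
  have hpow : precomp k π (τ : G) ^ Nat.card I = 1 := by
    rw [precomp_pow, ← Subgroup.coe_pow, hτcard]
    ext; simp [precomp]
  have hper : (fun i ↦ finrank k ((precomp k π (τ : G)).eigenspace ((θ τ : k) ^ i))).Periodic
      (Nat.card I) := fun i ↦ by
    dsimp only
    rw [pow_add, hroot.pow_eq_one, mul_one]
  have hindex : I.index * Nat.card I = Nat.card G := Subgroup.index_mul_card I
  refine Nat.pow_left_injective (Nat.card_pos (α := G)).ne' ?_
  calc (∏ i ∈ range (Nat.card I * m), Nat.card
          (π.asModule →ₗ[MonoidAlgebra F G] (twist F hθ (b + i)).asModule)) ^ Nat.card G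
      = (∏ i ∈ range (Nat.card I * m), Nat.card
          (π.asModule →ₗ[MonoidAlgebra F G] (twist F hθ (b + i)).asModule) ^ I.index) ^
          Nat.card I := by rw [prod_pow, ← pow_mul, hindex]
    _ = (Nat.card k ^ (m * finrank k (X →ₗ[F] k))) ^ Nat.card I := by
      rw [prod_congr rfl fun i _ ↦ natCard_linearMap_twist_pow_index hθ (b + i) π hτ,
        prod_pow_eq_pow_sum, sum_range_mul_add_of_periodic hper,
        sum_finrank_eigenspace_pow _ Nat.card_pos hroot hpow]
    _ = (Nat.card k ^ (Nat.card I * m)) ^ finrank F X := by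
      rw [finrank_linearMap_self, ← pow_mul, ← pow_mul]
      congr 1; ring
    _ = (Nat.card X ^ d) ^ Nat.card G := by
      rw [hcard, natCard_eq_pow_finrank (K := F) (V := X)]
      ring

end Hom

end Twist

section TwistModule

open Representation Module

theorem natCard_linearMap_monoidAlgebra (F G X : Type*) [Field F] [Group G] [Finite G]
    [AddCommGroup X] [Module F X] [Module.Finite F X] [Module (MonoidAlgebra F G) X]
    [IsScalarTower F (MonoidAlgebra F G) X] :
    Nat.card (X →ₗ[MonoidAlgebra F G] MonoidAlgebra F G) = Nat.card X := by
  classical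
  have : Fintype G := Fintype.ofFinite G
  let extend (φ : Dual F X) : X →ₗ[F] MonoidAlgebra F G :=
    ∑ g : G, MonoidAlgebra.lsingle g ∘ₗ φ ∘ₗ
      Algebra.lsmul F F X (MonoidAlgebra.single g⁻¹ (1 : F))
  have coeff_extend (φ x) (h : G) :
      (extend φ x).coeff h = φ (MonoidAlgebra.single h⁻¹ (1 : F) • x) := by
    simp [extend, MonoidAlgebra.coeff_sum, Finsupp.single_apply, LinearMap.sum_apply]
  have coeff_smul (g h : G) (y : MonoidAlgebra F G) :
      (MonoidAlgebra.single g (1 : F) • y).coeff h = y.coeff (g⁻¹ * h) := by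
    rw [smul_eq_mul, MonoidAlgebra.coeff_single_mul_apply, one_mul]
  rw [Nat.card_congr (finBasis F X).toDualEquiv.toEquiv]
  exact Nat.card_congr
    { toFun f := Finsupp.lapply (1 : G) ∘ₗ (MonoidAlgebra.coeffLinearEquiv F).toLinearMap ∘ₗ
        f.restrictScalars F
      invFun φ := MonoidAlgebra.equivariantOfLinearOfComm (extend φ) fun g x ↦ by
        ext h
        rw [coeff_smul, coeff_extend, coeff_extend, smul_smul, MonoidAlgebra.single_mul_single,
          mul_inv_rev, inv_inv, one_mul]
      left_inv f := by
        ext x h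
        simp [coeff_extend, -smul_eq_mul, coeff_smul]
      right_inv φ := by
        ext x
        simp [coeff_extend, ← MonoidAlgebra.one_def] }

variable {F G k : Type*} [Field F] [Group G] [Finite G] [Field k] [Finite k] [Algebra F k]
  [MulSemiringAction G k] [SMulCommClass G F k] {θ : G → kˣ} (hθ : IsUnitCocycle θ)

theorem prod_natCard_linearMap_twist
    (hinj : ∀ g ∈ (MulSemiringAction.toRingAut G k).ker, θ g = 1 → g = 1) {e d : ℕ}
    (he : ∀ g ∈ (MulSemiringAction.toRingAut G k).ker, θ g ^ e = 1)
    (hcard : Nat.card k ^ e = Nat.card F ^ (d * Nat.card G)) (b : ℕ)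
    (X : Type*) [AddCommGroup X] [Module F X] [Module (MonoidAlgebra F G) X]
    [IsScalarTower F (MonoidAlgebra F G) X] [Finite X] :
    ∏ i ∈ range e, Nat.card (X →ₗ[MonoidAlgebra F G] (twist F hθ (b + i)).asModule) =
      Nat.card X ^ d := by
  let toModule : (ofModule' (k := F) (G := G) X).asModule ≃ₗ[MonoidAlgebra F G] X :=
    { (ofModule' X).asModuleEquiv.toAddEquiv with
      map_smul' r x := by
        refine (asModuleEquiv_map_smul _ r x).trans ?_
        rw [asAlgebraHom_def, ofModule', Equiv.apply_symm_apply]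
        rfl }
  rw [← prod_natCard_asModule_linearMap_twist hθ (ofModule' X) hinj he hcard b]
  exact prod_congr rfl fun i _ ↦ Nat.card_congr
    (toModule.symm.arrowCongrAddEquiv (LinearEquiv.refl _ _)).toEquiv

end TwistModule

section TwistFree

open Representation Module

variable {F : Type v} {G : Type u} {k : Type (max v u)} [Field F] [Group G] [Finite G] [Field k]
  [Finite k] [Algebra F k] [MulSemiringAction G k] [SMulCommClass G F k] {θ : G → kˣ}
  (hθ : IsUnitCocycle θ)

theorem nonempty_pi_twist_equiv_pi_monoidAlgebra
    (hinj : ∀ g ∈ (MulSemiringAction.toRingAut G k).ker, θ g = 1 → g = 1) {e d : ℕ}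
    (he : ∀ g ∈ (MulSemiringAction.toRingAut G k).ker, θ g ^ e = 1)
    (hcard : Nat.card k ^ e = Nat.card F ^ (d * Nat.card G)) (b : ℕ) :
    Nonempty ((∀ i : Fin e, (twist F hθ (b + i)).asModule) ≃ₗ[MonoidAlgebra F G]
      (Fin d → MonoidAlgebra F G)) := by
  have : Finite F := Finite.of_injective _ (algebraMap F k).injective
  have : Finite (MonoidAlgebra F G) := Module.finite_of_finite F
  have (i : ℕ) : Finite (twist F hθ i).asModule := ‹Finite k›
  refine nonempty_linearEquiv_of_natCard_linearMap_eq fun X _ _ _ ↦ ?_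
  let : Module F X := Module.compHom X (algebraMap F (MonoidAlgebra F G))
  have : IsScalarTower F (MonoidAlgebra F G) X := IsScalarTower.of_algebraMap_smul fun _ _ ↦ rfl
  rw [natCard_linearMap_pi, natCard_linearMap_pi, natCard_linearMap_monoidAlgebra, prod_const,
    card_univ, Fintype.card_fin, ← prod_natCard_linearMap_twist hθ hinj he hcard b X,
    prod_range]

theorem projective_twist
    (hinj : ∀ g ∈ (MulSemiringAction.toRingAut G k).ker, θ g = 1 → g = 1) {e d : ℕ} (he₀ : 0 < e)
    (he : ∀ g ∈ (MulSemiringAction.toRingAut G k).ker, θ g ^ e = 1)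
    (hcard : Nat.card k ^ e = Nat.card F ^ (d * Nat.card G)) (b : ℕ) :
    Module.Projective (MonoidAlgebra F G) (twist F hθ b).asModule := by
  obtain ⟨f⟩ := nonempty_pi_twist_equiv_pi_monoidAlgebra hθ hinj he hcard b
  have := Module.Projective.of_equiv f.symm
  exact Module.Projective.of_split (P := (twist F hθ (b + (⟨0, he₀⟩ : Fin e))).asModule)
    (LinearMap.single (MonoidAlgebra F G) (fun i : Fin e ↦ (twist F hθ (b + i)).asModule) ⟨0, he₀⟩)
    (LinearMap.proj (⟨0, he₀⟩ : Fin e))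
    (LinearMap.proj_comp_single_same _ _ _)

end TwistFree

section Frobenius

open Representation

variable {p : ℕ} [Fact p.Prime] {G k : Type*} [Group G] [Field k] [Finite k]
  [Algebra (ZMod p) k] [MulSemiringAction G k] [SMulCommClass G (ZMod p) k]
  {θ : G → kˣ} (hθ : IsUnitCocycle θ)

theorem nonempty_twist_equiv_twist_mul (i : ℕ) :
    Nonempty ((twist (ZMod p) hθ i).asModule ≃ₗ[MonoidAlgebra (ZMod p) G]
      (twist (ZMod p) hθ (p * i)).asModule) := by
  have (i : ℕ) : Finite (twist (ZMod p) hθ i).asModule := ‹Finite k›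
  have : CharP k p := charP_of_injective_algebraMap (algebraMap (ZMod p) k).injective p
  let frob : IntertwiningMap (twist (ZMod p) hθ i) (twist (ZMod p) hθ (p * i)) :=
    { (frobenius k p).toAddMonoidHom.toZModLinearMap p with
      isIntertwining' g := LinearMap.ext fun x ↦ by
        change (frobenius k p) ((θ g : k) ^ i * g • x) = (θ g : k) ^ (p * i) * g • frobenius k p x
        simp_rw [frobenius_def]
        rw [mul_pow, smul_pow', ← pow_mul, mul_comm i] }
  exact ⟨LinearEquiv.ofBijective (IntertwiningMap.equivLinearMapAsModule _ _ frob)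
    (Finite.injective_iff_bijective.1 (frobenius_inj k p))⟩

theorem prod_natCard_linearMap_twist_of_not_dvd [Finite G]
    (hinj : ∀ g ∈ (MulSemiringAction.toRingAut G k).ker, θ g = 1 → g = 1) {E d : ℕ}
    (hE : ∀ g ∈ (MulSemiringAction.toRingAut G k).ker, θ g ^ ((p - 1) * E) = 1)
    (hcard : Nat.card k ^ ((p - 1) * E) = p ^ (d * Nat.card G))
    (X : Type*) [AddCommGroup X] [Module (ZMod p) X]
    [Module (MonoidAlgebra (ZMod p) G) X] [IsScalarTower (ZMod p) (MonoidAlgebra (ZMod p) G) X]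
    [Finite X] :
    ∏ i ∈ range (p * E) with ¬ p ∣ i,
      Nat.card (X →ₗ[MonoidAlgebra (ZMod p) G] (twist (ZMod p) hθ i).asModule) =
      Nat.card X ^ d := by
  have (i : ℕ) : Finite (twist (ZMod p) hθ i).asModule := ‹Finite k›
  rw [prod_filter_not_dvd_eq_prod_range_add (Fact.out : p.Prime).pos E (fun i ↦ Nat.card_pos)
    fun i ↦ (natCard_linearMap_congr (nonempty_twist_equiv_twist_mul hθ i).some X).symm]
  exact prod_natCard_linearMap_twist hθ hinj hE (by rwa [Nat.card_zmod]) E X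

end Frobenius

section PowClass

open Representation

theorem single_one_smul {k G V : Type*} [CommSemiring k] [Group G] [AddCommMonoid V] [Module k V]
    (ρ : Representation k G V) (g : G) (x : ρ.asModule) :
    (MonoidAlgebra.single g (1 : k) • x : ρ.asModule) = ρ g x :=
  (single_smul ρ 1 g x).trans (one_smul _ _)

/-- The group `H / Hᵖ` of `p`-th power classes of a commutative group `H`, written additively. -/
abbrev PowClass (p : ℕ) (H : Type*) [CommGroup H] : Type _ :=
  Additive (H ⧸ (powMonoidHom p : H →* H).range)

/-- The class in `H / Hᵖ` of an element of `H`. -/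
def powClass (p : ℕ) {H : Type*} [CommGroup H] : Additive H →+ PowClass p H where
  toFun u := Additive.ofMul (QuotientGroup.mk u.toMul)
  map_zero' := rfl
  map_add' _ _ := rfl

variable {p : ℕ} {G H : Type*} [Group G] [CommGroup H] [MulDistribMulAction G H]

theorem powClass_surjective :
    Function.Surjective (powClass p : Additive H →+ PowClass p H) := fun x ↦
  ⟨Additive.ofMul x.toMul.out, congrArg Additive.ofMul (QuotientGroup.out_eq' x.toMul)⟩

theorem powClass_eq_zero_iff {u : H} :
    powClass p (Additive.ofMul u) = 0 ↔ ∃ y : H, y ^ p = u :=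
  QuotientGroup.eq_one_iff (N := (powMonoidHom p : H →* H).range) u

instance : Module (ZMod p) (PowClass p H) :=
  AddCommGroup.zmodModule fun x ↦ by
    obtain ⟨u, rfl⟩ := powClass_surjective x
    rw [← map_nsmul]
    exact powClass_eq_zero_iff.2 ⟨u.toMul, rfl⟩

/-- The representation over `𝔽_p` on the `p`-th power classes of a group with `G`-action. -/
def powClassRep (p : ℕ) (G H : Type*) [Group G] [CommGroup H] [MulDistribMulAction G H] :
    Representation (ZMod p) G (PowClass p H) where
  toFun g := (QuotientGroup.map (powMonoidHom p).range (powMonoidHom p).range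
    (MulDistribMulAction.toMonoidHom H g) (by
      rintro _ ⟨y, rfl⟩
      exact ⟨g • y, (smul_pow' g y p).symm⟩)).toAdditive.toZModLinearMap p
  map_one' := LinearMap.ext fun x ↦ by
    obtain ⟨u, rfl⟩ := powClass_surjective x
    exact congrArg (powClass p) (one_smul G u.toMul)
  map_mul' g h := LinearMap.ext fun x ↦ by
    obtain ⟨u, rfl⟩ := powClass_surjective x
    exact congrArg (powClass p) (mul_smul g h u.toMul)

theorem powClassRep_powClass (g : G) (u : H) :
    powClassRep p G H g (powClass p (Additive.ofMul u)) =
      powClass p (Additive.ofMul (g • u)) := rfl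

/-- The submodule of `H / Hᵖ` of the classes of the elements of a `G`-stable subgroup `S`. -/
def classSubmodule (p : ℕ) (S : Subgroup H) (hS : ∀ g : G, ∀ u ∈ S, g • u ∈ S) :
    Submodule (MonoidAlgebra (ZMod p) G) (powClassRep p G H).asModule :=
  Subrepresentation.asSubmodule
    { toSubmodule := AddSubgroup.toZModSubmodule p (S.toAddSubgroup.map (powClass p))
      apply_mem_toSubmodule := by
        rintro g _ ⟨u, hu, rfl⟩
        exact ⟨Additive.ofMul (g • u.toMul), hS g _ hu, rfl⟩ }

variable {S : Subgroup H} {hS : ∀ g : G, ∀ u ∈ S, g • u ∈ S}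

theorem mem_classSubmodule {x : PowClass p H} :
    x ∈ classSubmodule p S hS ↔ ∃ u ∈ S, powClass p (Additive.ofMul u) = x := Iff.rfl

theorem classSubmodule_mono {S' : Subgroup H} {hS' : ∀ g : G, ∀ u ∈ S', g • u ∈ S'}
    (h : ∀ u ∈ S, ∃ y : H, u * y ^ p ∈ S') : classSubmodule p S hS ≤ classSubmodule p S' hS' := by
  rintro _ ⟨u, hu, rfl⟩
  obtain ⟨y, hy⟩ := h u.toMul hu
  refine ⟨_, hy, ?_⟩
  change powClass p (u + Additive.ofMul (y ^ p)) = _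
  rw [map_add, powClass_eq_zero_iff.2 ⟨y, rfl⟩, add_zero]

theorem exists_linearMap_classSubmodule {V : Type*} [AddCommGroup V] [Module (ZMod p) V]
    (ρ : Representation (ZMod p) G V) (q : Additive S →+ V)
    (hq : ∀ u : S, (∃ y : H, y ^ p = u) → q (Additive.ofMul u) = 0)
    (hequiv : ∀ (g : G) (u : S),
      q (Additive.ofMul ⟨g • (u : H), hS g u u.2⟩) = ρ g (q (Additive.ofMul u))) :
    ∃ Q : classSubmodule p S hS →ₗ[MonoidAlgebra (ZMod p) G] ρ.asModule, ∀ u : S,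
      Q ⟨powClass p (Additive.ofMul u), mem_classSubmodule.2 ⟨u, u.2, rfl⟩⟩ =
        q (Additive.ofMul u) := by
  let c : Additive S →+ classSubmodule p S hS :=
    { toFun u := ⟨powClass p (Additive.ofMul (u.toMul : H)),
        mem_classSubmodule.2 ⟨_, u.toMul.2, rfl⟩⟩
      map_zero' := rfl
      map_add' _ _ := rfl }
  have hc : Function.Surjective c := by
    rintro ⟨_, u, hu, rfl⟩
    exact ⟨Additive.ofMul ⟨u, hu⟩, rfl⟩
  have hker : c.ker ≤ q.ker := fun u hu ↦
    hq u.toMul (powClass_eq_zero_iff.1 (congrArg Subtype.val hu))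
  let Q₀ : classSubmodule p S hS →+ ρ.asModule := AddMonoidHom.liftOfSurjective c hc ⟨q, hker⟩
  have hQ₀ (u : Additive S) : Q₀ (c u) = q u :=
    AddMonoidHom.liftOfRightInverse_comp_apply c _ _ ⟨q, hker⟩ u
  refine ⟨MonoidAlgebra.equivariantOfLinearOfComm (Q₀.toZModLinearMap p) fun g x ↦ ?_,
    fun u ↦ hQ₀ (Additive.ofMul u)⟩
  obtain ⟨u, rfl⟩ := hc x
  have hgu : MonoidAlgebra.single g (1 : ZMod p) • c u =
      c (Additive.ofMul ⟨g • (u.toMul : H), hS g _ u.toMul.2⟩) :=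
    Subtype.ext (single_one_smul _ g _)
  change Q₀ _ = _ • Q₀ (c u)
  rw [hgu, hQ₀, hQ₀]
  exact (hequiv g u.toMul).trans (single_one_smul ρ g _).symm

end PowClass

section PrincipalUnits

open IsLocalRing

variable {A : Type*} [CommRing A]

/-- The group of units congruent to `1` modulo `π`. -/
def principalUnits (π : A) : Subgroup Aˣ :=
  (Units.map (Ideal.Quotient.mk (Ideal.span {π})).toMonoidHom).ker

theorem mem_principalUnits {π : A} {u : Aˣ} : u ∈ principalUnits π ↔ ∃ a, (u : A) = 1 + π * a := by
  simp only [principalUnits, MonoidHom.mem_ker, Units.ext_iff, Units.val_one, ← sub_eq_iff_eq_add']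
  exact (Ideal.Quotient.mk_eq_mk_iff_sub_mem _ _).trans Ideal.mem_span_singleton

theorem principalUnits_le_of_dvd {π π' : A} (h : π ∣ π') :
    principalUnits π' ≤ principalUnits π := by
  obtain ⟨c, rfl⟩ := h
  intro u hu
  obtain ⟨a, ha⟩ := mem_principalUnits.1 hu
  exact mem_principalUnits.2 ⟨c * a, by rw [ha, mul_assoc]⟩

theorem principalUnits_pow_antitone (π : A) : Antitone fun i : ℕ ↦ principalUnits (π ^ i) :=
  fun _ _ h ↦ principalUnits_le_of_dvd (pow_dvd_pow π h)

theorem mem_principalUnits_pow_zero (π : A) (u : Aˣ) : u ∈ principalUnits (π ^ 0) :=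
  mem_principalUnits.2 ⟨u - 1, by ring⟩

theorem mul_inv_mem_principalUnits {π : A} {u v : Aˣ} {c : A} (h : (u : A) = v + π * c) :
    u * v⁻¹ ∈ principalUnits π :=
  mem_principalUnits.2 ⟨c * (v⁻¹ : Aˣ), by
    rw [Units.val_mul, h, add_mul, Units.mul_inv, mul_assoc]⟩

section IsLocalRing

variable [IsLocalRing A]

theorem isUnit_add_mul_of_mem_maximalIdeal {π u : A} (hπ : π ∈ maximalIdeal A) (hu : IsUnit u)
    (a : A) : IsUnit (u + π * a) := by
  refine not_not.1 fun h ↦ ?_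
  have hsub := (maximalIdeal A).sub_mem h ((maximalIdeal A).mul_mem_right a hπ)
  rw [add_sub_cancel_right] at hsub
  exact hsub hu

theorem exists_mem_principalUnits {π : A} (hπ : π ∈ maximalIdeal A) (a : A) :
    ∃ u ∈ principalUnits π, (u : A) = 1 + π * a :=
  let h := isUnit_add_mul_of_mem_maximalIdeal hπ isUnit_one a
  ⟨h.unit, mem_principalUnits.2 ⟨a, rfl⟩, rfl⟩

variable [IsDomain A]

/-- The homomorphism from the units congruent to `1` modulo `π` to the residue field that sends
`1 + π a` to the residue of `a`. -/
noncomputable def principalUnitsResidue {π : A} (hπ₀ : π ≠ 0) (hπ : π ∈ maximalIdeal A) :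
    Additive (principalUnits π) →+ ResidueField A :=
  AddMonoidHom.mk' (fun u ↦ residue A (mem_principalUnits.1 u.toMul.2).choose) fun u v ↦ by
    have hu := (mem_principalUnits.1 u.toMul.2).choose_spec
    have hv := (mem_principalUnits.1 v.toMul.2).choose_spec
    have huv := (mem_principalUnits.1 (u + v).toMul.2).choose_spec
    set a := (mem_principalUnits.1 u.toMul.2).choose
    set b := (mem_principalUnits.1 v.toMul.2).choose
    set c := (mem_principalUnits.1 (u + v).toMul.2).choose
    have hc : c = a + b + π * (a * b) := mul_left_cancel₀ hπ₀ (add_left_cancel (a := 1) (by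
      rw [← huv, toMul_add, Subgroup.coe_mul, Units.val_mul, hu, hv]
      ring))
    rw [hc, map_add, map_add, map_mul, (residue_eq_zero_iff π).2 hπ, zero_mul, add_zero]

theorem principalUnitsResidue_ofMul {π : A} (hπ₀ : π ≠ 0) (hπ : π ∈ maximalIdeal A)
    {u : principalUnits π} {a : A} (ha : ((u : Aˣ) : A) = 1 + π * a) :
    principalUnitsResidue hπ₀ hπ (Additive.ofMul u) = residue A a := by
  have hu := (mem_principalUnits.1 u.2).choose_spec
  exact congrArg _ (mul_left_cancel₀ hπ₀ (add_left_cancel (hu.symm.trans ha)))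

theorem principalUnitsResidue_eq_zero_iff {π ϖ : A} (hπ₀ : π ≠ 0) (hπ : π ∈ maximalIdeal A)
    (hϖ : maximalIdeal A = Ideal.span {ϖ}) {u : principalUnits π} :
    principalUnitsResidue hπ₀ hπ (Additive.ofMul u) = 0 ↔ (u : Aˣ) ∈ principalUnits (π * ϖ) := by
  obtain ⟨a, ha⟩ := mem_principalUnits.1 u.2
  rw [principalUnitsResidue_ofMul hπ₀ hπ ha, residue_eq_zero_iff, hϖ, Ideal.mem_span_singleton,
    mem_principalUnits]
  refine exists_congr fun b ↦ ⟨fun hb ↦ by rw [ha, hb, mul_assoc], fun hb ↦ ?_⟩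
  exact mul_left_cancel₀ hπ₀ (add_left_cancel (ha.symm.trans (hb.trans (by rw [mul_assoc]))))

theorem principalUnitsResidue_surjective {π : A} (hπ₀ : π ≠ 0) (hπ : π ∈ maximalIdeal A) :
    Function.Surjective (principalUnitsResidue hπ₀ hπ) := fun x ↦ by
  obtain ⟨a, rfl⟩ := residue_surjective x
  obtain ⟨u, hu, hua⟩ := exists_mem_principalUnits hπ a
  exact ⟨Additive.ofMul ⟨u, hu⟩, principalUnitsResidue_ofMul hπ₀ hπ hua⟩

end IsLocalRing

end PrincipalUnits

section PowPrime

open IsLocalRing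

variable {A : Type*} [CommRing A] {p : ℕ} [Fact p.Prime] {ϖ : A}

theorem exists_eq_pow_add_mul [IsLocalRing A] [Finite (ResidueField A)] [CharP (ResidueField A) p]
    (hϖ : maximalIdeal A = Ideal.span {ϖ}) (a : A) : ∃ b c, a = b ^ p + ϖ * c := by
  obtain ⟨x, hx⟩ := Finite.surjective_of_injective (frobenius_inj (ResidueField A) p) (residue A a)
  obtain ⟨b, rfl⟩ := residue_surjective x
  have hmem : a - b ^ p ∈ maximalIdeal A := by
    rw [← residue_eq_zero_iff, map_sub, ← hx, map_pow, frobenius_def, sub_self]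
  rw [hϖ, Ideal.mem_span_singleton] at hmem
  obtain ⟨c, hc⟩ := hmem
  exact ⟨b, c, by linear_combination hc⟩

variable {E : ℕ} (hp : ϖ ^ ((p - 1) * E) ∣ (p : A))

include hp

theorem exists_one_add_pow_mul_pow {j : ℕ} (hj : j ≤ E) (a : A) :
    ∃ s, (1 + ϖ ^ j * a) ^ p = 1 + ϖ ^ (p * j) * (a ^ p + ϖ ^ ((p - 1) * (E - j)) * s) := by
  obtain ⟨r, hr⟩ := exists_add_pow_prime_eq (Fact.out : p.Prime) 1 (ϖ ^ j * a)
  obtain ⟨t, ht⟩ := hp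
  have hexp : ϖ ^ ((p - 1) * E) * ϖ ^ j = ϖ ^ (p * j) * ϖ ^ ((p - 1) * (E - j)) := by
    obtain ⟨q, hq⟩ := Nat.exists_eq_add_of_le' (Fact.out : p.Prime).one_le
    obtain ⟨l, rfl⟩ := Nat.exists_eq_add_of_le hj
    rw [← pow_add, ← pow_add, hq, Nat.add_sub_cancel, Nat.add_sub_cancel_left]
    ring
  refine ⟨t * a * r, ?_⟩
  rw [hr, one_pow, mul_pow, ← pow_mul, mul_comm j p, ht]
  linear_combination t * a * r * hexp

theorem pow_mem_principalUnits_pow {j : ℕ} (hj : j ≤ E) {y : Aˣ}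
    (hy : y ∈ principalUnits (ϖ ^ j)) : y ^ p ∈ principalUnits (ϖ ^ (p * j)) := by
  obtain ⟨a, ha⟩ := mem_principalUnits.1 hy
  obtain ⟨s, hs⟩ := exists_one_add_pow_mul_pow hp hj a
  exact mem_principalUnits.2 ⟨_, by rw [Units.val_pow_eq_pow_val, ha, hs]⟩

theorem exists_one_add_pow_mul_pow_of_lt {j : ℕ} (hj : j < E) (a : A) :
    ∃ s, (1 + ϖ ^ j * a) ^ p = 1 + ϖ ^ (p * j) * (a ^ p + ϖ * s) := by
  obtain ⟨s, hs⟩ := exists_one_add_pow_mul_pow hp hj.le a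
  have hpos : (p - 1) * (E - j) ≠ 0 :=
    (Nat.mul_pos (Nat.sub_pos_of_lt (Fact.out : p.Prime).one_lt) (Nat.sub_pos_of_lt hj)).ne'
  obtain ⟨m, hm⟩ := Nat.exists_eq_succ_of_ne_zero hpos
  exact ⟨ϖ ^ m * s, by rw [hs, hm, pow_succ']; ring⟩

theorem exists_mul_pow_mem_principalUnits [IsLocalRing A] [Finite (ResidueField A)]
    [CharP (ResidueField A) p] (hϖ : maximalIdeal A = Ideal.span {ϖ}) {j : ℕ} (hj : j < E)
    {u : Aˣ} (hu : u ∈ principalUnits (ϖ ^ (p * j))) :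
    ∃ y : Aˣ, u * y ^ p ∈ principalUnits (ϖ ^ (p * j + 1)) := by
  obtain ⟨a, ha⟩ := mem_principalUnits.1 hu
  obtain ⟨b, c, hbc⟩ := exists_eq_pow_add_mul (p := p) hϖ a
  obtain ⟨s, hs⟩ := exists_one_add_pow_mul_pow_of_lt hp hj b
  have hmem : ϖ ^ (p * j + 1) ∈ maximalIdeal A :=
    Ideal.pow_mem_of_mem _ (hϖ ▸ Ideal.mem_span_singleton_self ϖ) _ (Nat.succ_pos _)
  have hpow : (1 + ϖ ^ j * b) ^ p = u + ϖ ^ (p * j + 1) * (s - c) := by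
    rw [hs, ha, hbc, pow_succ]
    ring
  have hunit : IsUnit (1 + ϖ ^ j * b) :=
    (isUnit_pow_iff (Fact.out : p.Prime).ne_zero).1
      (hpow ▸ isUnit_add_mul_of_mem_maximalIdeal hmem u.isUnit _)
  refine ⟨hunit.unit⁻¹, ?_⟩
  rw [inv_pow]
  exact mul_inv_mem_principalUnits (c := c - s) (by
    rw [Units.val_pow_eq_pow_val, hunit.unit_spec, hpow]
    ring)

variable [IsDomain A]

theorem mem_principalUnits_pow_succ_of_pow_mem (hϖ : Prime ϖ) {j : ℕ} (hj : j < E)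
    {y : Aˣ} (hy : y ∈ principalUnits (ϖ ^ j)) (hyp : y ^ p ∈ principalUnits (ϖ ^ (p * j + 1))) :
    y ∈ principalUnits (ϖ ^ (j + 1)) := by
  obtain ⟨a, ha⟩ := mem_principalUnits.1 hy
  obtain ⟨s, hs⟩ := exists_one_add_pow_mul_pow_of_lt hp hj a
  obtain ⟨b, hb⟩ := mem_principalUnits.1 hyp
  rw [Units.val_pow_eq_pow_val, ha, hs, pow_succ, mul_assoc] at hb
  have hab := mul_left_cancel₀ (pow_ne_zero _ hϖ.ne_zero) (add_left_cancel hb)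
  obtain ⟨c, hc⟩ := hϖ.dvd_of_dvd_pow (a := a) (n := p) ⟨b - s, by linear_combination hab⟩
  exact mem_principalUnits.2 ⟨c, by rw [ha, hc, pow_succ, mul_assoc]⟩

theorem mem_principalUnits_pow_of_pow_mem (hϖ : Prime ϖ) {y : Aˣ} {i j : ℕ}
    (hyp : y ^ p ∈ principalUnits (ϖ ^ i)) (hj : j ≤ E) (hji : p * j < i + p) :
    y ∈ principalUnits (ϖ ^ j) := by
  induction j with
  | zero => exact mem_principalUnits_pow_zero ϖ y
  | succ j ih =>
    rw [Nat.mul_succ, Nat.add_lt_add_iff_right] at hji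
    exact mem_principalUnits_pow_succ_of_pow_mem hp hϖ hj (ih (by lia) (by lia))
      (principalUnits_pow_antitone ϖ hji hyp)

theorem pow_mem_principalUnits_pow_succ (hϖ : Prime ϖ) {y : Aˣ} {i : ℕ} (hi : i < p * E)
    (hpi : ¬ p ∣ i) (hyp : y ^ p ∈ principalUnits (ϖ ^ i)) :
    y ^ p ∈ principalUnits (ϖ ^ (i + 1)) := by
  have hp₀ : 0 < p := (Fact.out : p.Prime).pos
  have hlt : i < p * (i / p + 1) := Nat.lt_mul_div_succ i hp₀
  have hle : p * (i / p) < i :=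
    (Nat.mul_div_le i p).lt_of_ne fun h ↦ hpi ⟨_, h.symm⟩
  have hE : i / p + 1 ≤ E := Nat.div_lt_of_lt_mul hi
  have hy := mem_principalUnits_pow_of_pow_mem hp hϖ hyp hE (by rw [mul_add]; lia)
  exact principalUnits_pow_antitone ϖ hlt (pow_mem_principalUnits_pow hp hE hy)

end PowPrime

section ArtinSchreierLift

open IsLocalRing Polynomial

variable {A : Type*} [CommRing A] {p : ℕ}

/-- The polynomial `f` with `lam ^ p * f x = (1 + lam * x) ^ p - 1` when `lam ^ (p - 1) = -p`; it
lifts the Artin-Schreier polynomial `X ^ p - X` of the residue field. -/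
noncomputable def artinSchreierLift (p : ℕ) (lam : A) : A[X] :=
  X ^ p - ∑ i ∈ range (p - 1), C (((p.choose (i + 1) / p : ℕ) : A) * lam ^ i) * X ^ (i + 1)

theorem mem_maximalIdeal_of_pow_eq_neg [IsLocalRing A] [CharP (ResidueField A) p] {lam : A}
    (hlam : lam ^ (p - 1) = -(p : A)) : lam ∈ maximalIdeal A := by
  refine Ideal.IsPrime.mem_of_pow_mem inferInstance (p - 1) ?_
  rw [← residue_eq_zero_iff, hlam, map_neg, map_natCast, CharP.cast_eq_zero, neg_zero]

theorem map_artinSchreierLift {B : Type*} [CommRing B] (φ : A →+* B) (lam : A) :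
    (artinSchreierLift p lam).map φ = artinSchreierLift p (φ lam) := by
  simp [artinSchreierLift, Polynomial.map_sum]

variable [hp : Fact p.Prime]

theorem monic_artinSchreierLift_sub_C (lam a : A) : (artinSchreierLift p lam - C a).Monic := by
  nontriviality A
  rw [artinSchreierLift, sub_sub]
  refine (monic_X_pow p).sub_of_left ?_
  rw [degree_X_pow]
  refine (degree_add_le _ _).trans_lt (max_lt ((degree_sum_le _ _).trans_lt
    ((Finset.sup_lt_iff (WithBot.bot_lt_coe p)).2 fun i hi ↦ ?_)) ?_)
  · have := mem_range.1 hi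
    exact (degree_C_mul_X_pow_le _ _).trans_lt (Nat.cast_lt.2 (by lia))
  · exact degree_C_le.trans_lt (Nat.cast_pos.2 hp.out.pos)

theorem pow_mul_eval_artinSchreierLift {lam : A} (hlam : lam ^ (p - 1) = -(p : A)) (x : A) :
    lam ^ p * (artinSchreierLift p lam).eval x = (1 + lam * x) ^ p - 1 := by
  obtain ⟨q, rfl⟩ := Nat.exists_eq_add_of_le' hp.out.one_le
  have hlam' : lam ^ (q + 1) = -((q + 1 : ℕ) : A) * lam := by
    rw [pow_succ, ← hlam, Nat.add_sub_cancel]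
  have hterm (i : ℕ) (hi : i ∈ range q) :
      lam ^ (q + 1) * ((((q + 1).choose (i + 1) / (q + 1) : ℕ) : A) * lam ^ i * x ^ (i + 1)) =
        -((lam * x) ^ (i + 1) * ((q + 1).choose (i + 1) : A)) := by
    have hdvd := hp.out.dvd_choose_self i.succ_ne_zero
      (Nat.succ_lt_succ (mem_range.1 hi))
    conv_rhs => rw [← Nat.mul_div_cancel' hdvd]
    rw [hlam']
    push_cast
    ring
  rw [add_comm 1, add_pow, sum_range_succ, sum_range_succ', artinSchreierLift]
  simp only [eval_sub, eval_pow, eval_X, eval_finsetSum, eval_mul, eval_C, Nat.add_sub_cancel,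
    mul_sub, mul_sum, one_pow, mul_one, sum_congr rfl hterm, sum_neg_distrib]
  simp only [pow_zero, Nat.choose_zero_right, Nat.choose_self, Nat.cast_one]
  ring

theorem map_residue_artinSchreierLift [IsLocalRing A] {lam : A} (hlam : lam ∈ maximalIdeal A) :
    (artinSchreierLift p lam).map (residue A) = X ^ p - X := by
  rw [artinSchreierLift, Polynomial.map_sub, Polynomial.map_pow, map_X, Polynomial.map_sum,
    sum_eq_single_of_mem 0 (mem_range.2 (Nat.sub_pos_of_lt hp.out.one_lt))]
  · simp [Nat.div_self hp.out.pos]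
  · intro i _ hi
    simp [(residue_eq_zero_iff lam).2 hlam, hi]

theorem residue_eq_of_one_add_mul_pow_eq [IsLocalRing A] [CharP (ResidueField A) p]
    [IsDomain A] {lam : A} (hlam₀ : lam ≠ 0)
    (hlam : lam ^ (p - 1) = -(p : A)) {a x : A} (h : (1 + lam * x) ^ p = 1 + lam ^ p * a) :
    residue A a = residue A x ^ p - residue A x := by
  rw [← sub_eq_iff_eq_add', ← pow_mul_eval_artinSchreierLift hlam] at h
  rw [← mul_left_cancel₀ (pow_ne_zero p hlam₀) h, ← eval₂_hom, ← eval_map,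
    map_residue_artinSchreierLift (mem_maximalIdeal_of_pow_eq_neg hlam)]
  simp

theorem exists_one_add_mul_pow_eq [HenselianLocalRing A] [CharP (ResidueField A) p] {lam : A}
    (hlam : lam ^ (p - 1) = -(p : A)) {a : A} {x₀ : ResidueField A}
    (h : residue A a = x₀ ^ p - x₀) :
    ∃ x, (1 + lam * x) ^ p = 1 + lam ^ p * a ∧ residue A x = x₀ := by
  have hmap : (artinSchreierLift p lam - C a).map (residue A) = X ^ p - X - C (residue A a) := by
    rw [Polynomial.map_sub, map_C,
      map_residue_artinSchreierLift (mem_maximalIdeal_of_pow_eq_neg hlam)]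
  have hhensel := ((HenselianLocalRing.TFAE A).out 0 1).1 ‹_›
  obtain ⟨x, hx, rfl⟩ := hhensel _ (monic_artinSchreierLift_sub_C lam a) x₀
    (by rw [← eval_map_algebraMap, ResidueField.algebraMap_eq, hmap]; simp [h])
    (by rw [← eval_map_algebraMap, ← derivative_map, ResidueField.algebraMap_eq, hmap]
        simp [derivative_X_pow])
  rw [IsRoot, eval_sub, eval_C, sub_eq_zero] at hx
  exact ⟨x, by rw [← hx, pow_mul_eval_artinSchreierLift hlam, add_sub_cancel], rfl⟩

end ArtinSchreierLift

section FiniteFieldTrace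

variable (F : Type*) {k : Type*} [Field F] [Fintype F] [Field k] [Algebra F k]

theorem pow_card_eq_self_iff_mem_range_algebraMap [Finite k] {x : k} :
    x ^ Fintype.card F = x ↔ x ∈ Set.range (algebraMap F k) := by
  rw [IsGalois.mem_range_algebraMap_iff_fixed]
  refine ⟨fun hx σ ↦ ?_, fun hx ↦ hx (FiniteField.frobeniusAlgEquivOfAlgebraic F k)⟩
  obtain ⟨i, rfl⟩ := (FiniteField.bijective_frobeniusAlgEquivOfAlgebraic_pow F k).2 σ
  rw [AlgEquiv.coe_pow]
  exact Function.iterate_fixed hx i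

theorem trace_eq_zero_iff_exists_pow_card_sub_eq [Finite k] {x : k} :
    Algebra.trace F k x = 0 ↔ ∃ y : k, y ^ Fintype.card F - y = x := by
  let W : k →ₗ[F] k := (FiniteField.frobeniusAlgHom F k).toLinearMap - LinearMap.id
  have hker : W.ker = LinearMap.range (Algebra.linearMap F k) := by
    ext y
    exact sub_eq_zero.trans (pow_card_eq_self_iff_mem_range_algebraMap F)
  have hle : W.range ≤ (Algebra.trace F k).ker := by
    rintro _ ⟨y, rfl⟩
    exact (map_sub _ _ _).trans (sub_eq_zero.2
      (Algebra.trace_eq_of_algEquiv (FiniteField.frobeniusAlgEquivOfAlgebraic F k) y))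
  have hker₁ : Module.finrank F W.ker = 1 := by
    rw [hker, LinearMap.finrank_range_of_inj (algebraMap F k).injective, Module.finrank_self]
  have htrace : Module.finrank F (Algebra.trace F k).range = 1 := by
    rw [LinearMap.range_eq_top.2 (Algebra.trace_surjective F k), finrank_top, Module.finrank_self]
  have hW := W.finrank_range_add_finrank_ker
  have hT := (Algebra.trace F k).finrank_range_add_finrank_ker
  have heq := Submodule.eq_of_le_of_finrank_eq hle (by lia)
  rw [← LinearMap.mem_ker, ← heq]
  rfl

end FiniteFieldTrace

section TraceTwist

variable {F G k : Type*} [Field F] [Fintype F] [Group G] [Field k] [Finite k] [Algebra F k]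
  [MulSemiringAction G k] [SMulCommClass G F k] {θ : G → kˣ} (hθ : IsUnitCocycle θ)

theorem algebraMap_trace_twist_card {g : G} (hg : (θ g : k) ^ Fintype.card F = θ g) (x : k) :
    algebraMap F k (Algebra.trace F k (twist F hθ (Fintype.card F) g x)) =
      twist F hθ 1 g (algebraMap F k (Algebra.trace F k x)) := by
  obtain ⟨c, hc⟩ := (pow_card_eq_self_iff_mem_range_algebraMap F).1 hg
  rw [twist_apply, twist_apply, hg, pow_one, ← hc, ← Algebra.smul_def, map_smul, smul_eq_mul,
    map_mul, smul_algebraMap]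
  rw [← Algebra.trace_eq_of_algEquiv (MulSemiringAction.toAlgEquiv F k g) x]
  rfl

end TraceTwist

attribute [local instance] Units.mulDistribMulActionRight

section ResidueCocycle

open IsLocalRing

variable {G A : Type*} [Group G] [CommRing A] [MulSemiringAction G A] {π : A}

theorem associated_pow_smul (hst : ∀ g : G, Associated π (g • π)) (i : ℕ) (g : G) :
    Associated (π ^ i) (g • π ^ i) := by
  rw [smul_pow']
  exact (hst g).pow_pow

theorem smul_mem_principalUnits (hst : ∀ g : G, Associated π (g • π)) (g : G) (u : Aˣ)
    (hu : u ∈ principalUnits π) : g • u ∈ principalUnits π := by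
  obtain ⟨a, ha⟩ := mem_principalUnits.1 hu
  obtain ⟨c, hc⟩ := hst g
  exact mem_principalUnits.2
    ⟨c * g • a, by rw [Units.coe_smul, ha, smul_add, smul_one, smul_mul', ← hc, mul_assoc]⟩

variable [IsLocalRing A]

/-- The residue class of the unit `g • π / π`, as a function of `g`. -/
noncomputable def residueCocycle (hst : ∀ g : G, Associated π (g • π)) (g : G) :
    (ResidueField A)ˣ :=
  Units.map (residue A) (hst g).choose

variable (hst : ∀ g : G, Associated π (g • π))

theorem exists_smul_eq_mul_residueCocycle (g : G) :
    ∃ c : A, g • π = π * c ∧ residue A c = residueCocycle hst g :=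
  ⟨_, (hst g).choose_spec.symm, rfl⟩

variable [IsDomain A] (hπ₀ : π ≠ 0)

include hπ₀

theorem residueCocycle_eq {g : G} {c : A} (hc : g • π = π * c) :
    (residueCocycle hst g : ResidueField A) = residue A c := by
  obtain ⟨c', hc', h⟩ := exists_smul_eq_mul_residueCocycle hst g
  rw [← h, mul_left_cancel₀ hπ₀ (hc'.symm.trans hc)]

theorem isUnitCocycle_residueCocycle : IsUnitCocycle (residueCocycle hst) := fun g h ↦ by
  obtain ⟨c, hc, hgc⟩ := exists_smul_eq_mul_residueCocycle hst g
  obtain ⟨d, hd, hhd⟩ := exists_smul_eq_mul_residueCocycle hst h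
  rw [← hgc, ← hhd, ← ResidueField.residue_smul, ← map_mul]
  exact residueCocycle_eq hst hπ₀ (by rw [mul_smul, hd, smul_mul', hc, mul_assoc])

theorem residueCocycle_pow_eq_residue {g : G} {n : ℕ} {c : A} (hc : g • π ^ n = π ^ n * c) :
    (residueCocycle hst g : ResidueField A) ^ n = residue A c := by
  obtain ⟨b, hb, hgb⟩ := exists_smul_eq_mul_residueCocycle hst g
  rw [smul_pow', hb, mul_pow] at hc
  rw [← hgb, ← map_pow, mul_left_cancel₀ (pow_ne_zero n hπ₀) hc]

variable {p : ℕ} [Fact p.Prime]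

theorem residueCocycle_pow_prime (hπ : π ^ (p - 1) = -(p : A)) (g : G) :
    (residueCocycle hst g : ResidueField A) ^ p = residueCocycle hst g := by
  have hfix : g • π ^ (p - 1) = π ^ (p - 1) * 1 := by
    rw [hπ, mul_one, smul_neg]
    exact congrArg _ (map_natCast (MulSemiringAction.toRingHom G A g) p)
  have hpow := residueCocycle_pow_eq_residue hst hπ₀ hfix
  rw [map_one] at hpow
  rw [← Nat.sub_add_cancel (Fact.out : p.Prime).one_le, pow_succ, hpow, one_mul]

variable [Algebra (ZMod p) (ResidueField A)]
  [SMulCommClass G (ZMod p) (ResidueField A)]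

theorem principalUnitsResidue_smul (i : ℕ) (hi : π ^ i ∈ maximalIdeal A) (g : G)
    (u : principalUnits (π ^ i)) :
    principalUnitsResidue (pow_ne_zero i hπ₀) hi (Additive.ofMul
        ⟨g • (u : Aˣ), smul_mem_principalUnits (associated_pow_smul hst i) g u u.2⟩) =
      twist (ZMod p) (isUnitCocycle_residueCocycle hst hπ₀) i g
        (principalUnitsResidue (pow_ne_zero i hπ₀) hi (Additive.ofMul u)) := by
  obtain ⟨a, ha⟩ := mem_principalUnits.1 u.2
  obtain ⟨c, hc, hgc⟩ := exists_smul_eq_mul_residueCocycle hst g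
  rw [principalUnitsResidue_ofMul _ hi ha, twist_apply, ← hgc, ← ResidueField.residue_smul,
    ← map_pow, ← map_mul]
  refine principalUnitsResidue_ofMul _ hi ?_
  rw [Units.coe_smul, ha, smul_add, smul_one, smul_mul', smul_pow', hc, mul_pow, mul_assoc]

end ResidueCocycle

section UnitFiltration

open IsLocalRing

variable {p : ℕ} {G A : Type*} [Group G] [CommRing A] [MulSemiringAction G A] {π : A}

/-- The submodule of `Aˣ / (Aˣ)ᵖ` of the classes of the units congruent to `1` modulo `π ^ i`. -/
def unitFiltration (p : ℕ) (hst : ∀ g : G, Associated π (g • π)) (i : ℕ) :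
    Submodule (MonoidAlgebra (ZMod p) G) (powClassRep p G Aˣ).asModule :=
  classSubmodule p (principalUnits (π ^ i)) (smul_mem_principalUnits (associated_pow_smul hst i))

variable (hst : ∀ g : G, Associated π (g • π))

theorem unitFiltration_antitone : Antitone (unitFiltration p hst) := fun _ _ h ↦
  classSubmodule_mono fun u hu ↦ ⟨1, by
    rw [one_pow, mul_one]
    exact principalUnits_pow_antitone π h hu⟩

theorem unitFiltration_zero : unitFiltration p hst 0 = ⊤ :=
  eq_top_iff.2 fun x _ ↦ by
    obtain ⟨u, rfl⟩ := powClass_surjective (p := p) (H := Aˣ) x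
    exact mem_classSubmodule.2 ⟨_, mem_principalUnits_pow_zero π _, rfl⟩

variable [Fact p.Prime] [IsLocalRing A] (hπ : maximalIdeal A = Ideal.span {π}) {E : ℕ}
  (hp : π ^ ((p - 1) * E) ∣ (p : A))

include hπ hp

theorem unitFiltration_mul_eq_succ [Finite (ResidueField A)] [CharP (ResidueField A) p] {j : ℕ}
    (hj : j < E) : unitFiltration p hst (p * j) = unitFiltration p hst (p * j + 1) :=
  (classSubmodule_mono fun _ ↦ exists_mul_pow_mem_principalUnits hp hπ hj).antisymm
    (unitFiltration_antitone hst (Nat.le_succ _))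

theorem nonempty_unitFiltration_equiv_prod [IsDomain A] [Algebra (ZMod p) (ResidueField A)]
    [SMulCommClass G (ZMod p) (ResidueField A)] (hπ₀ : π ≠ 0) {i : ℕ} (hi : i < p * E)
    (hpi : ¬ p ∣ i)
    [Module.Projective (MonoidAlgebra (ZMod p) G)
      (twist (ZMod p) (isUnitCocycle_residueCocycle hst hπ₀) i).asModule] :
    Nonempty (unitFiltration p hst i ≃ₗ[MonoidAlgebra (ZMod p) G]
      unitFiltration p hst (i + 1) ×
        (twist (ZMod p) (isUnitCocycle_residueCocycle hst hπ₀) i).asModule) := by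
  have hprime : Prime π := (Ideal.span_singleton_prime hπ₀).1 (hπ ▸ inferInstance)
  have hi₀ : 0 < i := Nat.pos_of_ne_zero fun h ↦ hpi (h ▸ dvd_zero p)
  have hmem : π ^ i ∈ maximalIdeal A :=
    Ideal.pow_mem_of_mem _ (hπ ▸ Ideal.mem_span_singleton_self π) _ hi₀
  have hresidue (u : principalUnits (π ^ i)) :
      principalUnitsResidue (pow_ne_zero i hπ₀) hmem (Additive.ofMul u) = 0 ↔
        (u : Aˣ) ∈ principalUnits (π ^ (i + 1)) := by
    rw [pow_succ]
    exact principalUnitsResidue_eq_zero_iff _ hmem hπ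
  obtain ⟨Q, hQ⟩ := exists_linearMap_classSubmodule
    (twist (ZMod p) (isUnitCocycle_residueCocycle hst hπ₀) i)
    (principalUnitsResidue (pow_ne_zero i hπ₀) hmem)
    (fun u ⟨y, hy⟩ ↦ (hresidue u).2
      (hy ▸ pow_mem_principalUnits_pow_succ hp hprime hi hpi (hy ▸ u.2)))
    (principalUnitsResidue_smul hst hπ₀ i hmem)
  refine nonempty_linearEquiv_prod_of_projective
    (unitFiltration_antitone hst (Nat.le_succ i)) Q (fun x ↦ ?_) ?_
  · obtain ⟨u, rfl⟩ := principalUnitsResidue_surjective (pow_ne_zero i hπ₀) hmem x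
    exact ⟨_, hQ u.toMul⟩
  · rintro ⟨_, u, hu, rfl⟩
    refine ⟨fun h ↦ ⟨u, (hresidue ⟨u, hu⟩).1 ((hQ ⟨u, hu⟩).symm.trans h), rfl⟩, ?_⟩
    rintro ⟨w, hw, hwu⟩
    have hwi := principalUnits_pow_antitone π (Nat.le_succ i) hw
    exact (congrArg Q (Subtype.ext hwu.symm)).trans
      ((hQ ⟨w.toMul, hwi⟩).trans ((hresidue ⟨w.toMul, hwi⟩).2 hw))

end UnitFiltration

section RootsOfUnity

instance (p : ℕ) (R : Type*) [CommRing R] : Module (ZMod p) (Additive (rootsOfUnity p R)) :=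
  AddCommGroup.zmodModule fun ζ ↦ Additive.toMul.injective (Subtype.ext ζ.toMul.2)

/-- The representation over `𝔽_p` on the group of `p`-th roots of unity of a ring with
`G`-action. -/
def rootsOfUnityRep (p : ℕ) (G R : Type*) [Group G] [CommRing R] [MulSemiringAction G R] :
    Representation (ZMod p) G (Additive (rootsOfUnity p R)) where
  toFun g :=
    (restrictRootsOfUnity (MulSemiringAction.toRingHom G R g) p).toAdditive.toZModLinearMap p
  map_one' := by
    ext ζ
    exact one_smul G (ζ.toMul.1 : R)
  map_mul' g h := by
    ext ζ
    exact mul_smul g h (ζ.toMul.1 : R)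

end RootsOfUnity

section TopQuotient

open IsLocalRing

variable {p : ℕ} [Fact p.Prime] {A : Type*} [CommRing A] [IsDomain A] {lam : A}

theorem mem_principalUnits_of_pow_mem [IsIntegrallyClosed A] (hlam₀ : lam ≠ 0)
    (hlam : lam ^ (p - 1) = -(p : A)) {y : Aˣ} (hy : y ^ p ∈ principalUnits (lam ^ p)) :
    y ∈ principalUnits lam := by
  obtain ⟨a, ha⟩ := mem_principalUnits.1 hy
  let φ := algebraMap A (FractionRing A)
  have hφ₀ : φ lam ≠ 0 := (map_ne_zero_iff φ (IsFractionRing.injective A _)).2 hlam₀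
  have hφ : φ lam ^ (p - 1) = -(p : FractionRing A) := by rw [← map_pow, hlam, map_neg, map_natCast]
  have hφy : φ y = 1 + φ lam * ((φ y - 1) / φ lam) := by rw [mul_div_cancel₀ _ hφ₀]; ring
  have heval : (artinSchreierLift p (φ lam)).eval ((φ y - 1) / φ lam) = φ a := by
    refine mul_left_cancel₀ (pow_ne_zero p hφ₀) ?_
    rw [pow_mul_eval_artinSchreierLift hφ, ← hφy, ← map_pow, ← Units.val_pow_eq_pow_val, ha]
    simp
  have hint : IsIntegral A ((φ y - 1) / φ lam) :=
    ⟨_, monic_artinSchreierLift_sub_C (p := p) lam a, by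
      rw [← Polynomial.eval_map, Polynomial.map_sub, Polynomial.map_C, map_artinSchreierLift,
        Polynomial.eval_sub, Polynomial.eval_C]
      exact sub_eq_zero.2 heval⟩
  obtain ⟨z, hz⟩ := IsIntegrallyClosed.algebraMap_eq_of_integral hint
  refine mem_principalUnits.2 ⟨z, IsFractionRing.injective A (FractionRing A) ?_⟩
  rw [map_add, map_mul, hz, map_one]
  exact hφy

theorem rootsOfUnity_le_principalUnits [IsIntegrallyClosed A] (hlam₀ : lam ≠ 0)
    (hlam : lam ^ (p - 1) = -(p : A)) : rootsOfUnity p A ≤ principalUnits (lam ^ 1) := fun ζ hζ ↦ by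
  rw [pow_one]
  exact mem_principalUnits_of_pow_mem hlam₀ hlam ((mem_rootsOfUnity p ζ).1 hζ ▸ one_mem _)

variable [HenselianLocalRing A] [CharP (ResidueField A) p]

theorem exists_pow_eq_iff_exists_pow_sub_eq_residue [IsIntegrallyClosed A] (hlam₀ : lam ≠ 0)
    (hlam : lam ^ (p - 1) = -(p : A)) {u : Aˣ} {a : A} (ha : (u : A) = 1 + lam ^ p * a) :
    (∃ y : Aˣ, y ^ p = u) ↔ ∃ x, x ^ p - x = residue A a := by
  constructor
  · rintro ⟨y, rfl⟩
    obtain ⟨x, hx⟩ := mem_principalUnits.1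
      (mem_principalUnits_of_pow_mem hlam₀ hlam (mem_principalUnits.2 ⟨a, ha⟩))
    rw [Units.val_pow_eq_pow_val, hx] at ha
    exact ⟨_, (residue_eq_of_one_add_mul_pow_eq hlam₀ hlam ha).symm⟩
  · rintro ⟨x₀, hx₀⟩
    obtain ⟨x, hx, -⟩ := exists_one_add_mul_pow_eq hlam hx₀.symm
    obtain ⟨y, -, hy⟩ := exists_mem_principalUnits (mem_maximalIdeal_of_pow_eq_neg hlam) x
    exact ⟨y, Units.ext (by rw [Units.val_pow_eq_pow_val, hy, hx, ha])⟩

variable [Algebra (ZMod p) (ResidueField A)] [Finite (ResidueField A)]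

theorem exists_pow_eq_iff_trace_principalUnitsResidue_eq_zero [IsIntegrallyClosed A]
    (hlam₀ : lam ≠ 0) (hlam : lam ^ (p - 1) = -(p : A)) (hmem : lam ^ p ∈ maximalIdeal A)
    (u : principalUnits (lam ^ p)) :
    (∃ y : Aˣ, y ^ p = u) ↔ Algebra.trace (ZMod p) (ResidueField A)
      (principalUnitsResidue (pow_ne_zero p hlam₀) hmem (Additive.ofMul u)) = 0 := by
  obtain ⟨a, ha⟩ := mem_principalUnits.1 u.2
  rw [exists_pow_eq_iff_exists_pow_sub_eq_residue hlam₀ hlam ha,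
    principalUnitsResidue_ofMul _ hmem ha, trace_eq_zero_iff_exists_pow_card_sub_eq, ZMod.card]

theorem range_principalUnitsResidue_rootsOfUnity [IsIntegrallyClosed A] (hlam₀ : lam ≠ 0)
    (hlam : lam ^ (p - 1) = -(p : A)) (hmem : lam ^ 1 ∈ maximalIdeal A) :
    Set.range ((principalUnitsResidue (pow_ne_zero 1 hlam₀) hmem).comp
        (MonoidHom.toAdditive
          (Subgroup.inclusion (rootsOfUnity_le_principalUnits hlam₀ hlam)))) =
      Set.range (algebraMap (ZMod p) (ResidueField A)) := by
  ext x
  rw [← pow_card_eq_self_iff_mem_range_algebraMap (ZMod p), ZMod.card]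
  constructor
  · rintro ⟨ζ, rfl⟩
    obtain ⟨a, ha⟩ := mem_principalUnits.1 (rootsOfUnity_le_principalUnits hlam₀ hlam ζ.toMul.2)
    have hpow : (1 + lam * a) ^ p = 1 + lam ^ p * 0 := by
      rw [← pow_one lam, ← ha, ← Units.val_pow_eq_pow_val, ζ.toMul.2]
      simp
    have hres := residue_eq_of_one_add_mul_pow_eq hlam₀ hlam hpow
    rw [map_zero, eq_comm, sub_eq_zero] at hres
    have hval := principalUnitsResidue_ofMul (pow_ne_zero 1 hlam₀) hmem
      (u := Subgroup.inclusion (rootsOfUnity_le_principalUnits hlam₀ hlam) ζ.toMul) ha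
    exact (congrArg (· ^ p) hval).trans (hres.trans hval.symm)
  · intro hx
    obtain ⟨a, ha, rfl⟩ := exists_one_add_mul_pow_eq (a := 0) hlam (x₀ := x) (by
      rw [map_zero, hx, sub_self])
    obtain ⟨u, -, hua⟩ := exists_mem_principalUnits hmem a
    have hζ : u ^ p = 1 := Units.ext (by
      rw [Units.val_pow_eq_pow_val, hua, pow_one, ha, mul_zero, add_zero, Units.val_one])
    exact ⟨Additive.ofMul ⟨u, hζ⟩, principalUnitsResidue_ofMul (pow_ne_zero 1 hlam₀) hmem hua⟩

variable {G : Type*} [Group G] [MulSemiringAction G A] [SMulCommClass G (ZMod p) (ResidueField A)]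
  (hst : ∀ g : G, Associated lam (g • lam))

theorem exists_injective_linearMap_unitFiltration_prime [IsIntegrallyClosed A] (hlam₀ : lam ≠ 0)
    (hlam : lam ^ (p - 1) = -(p : A)) :
    ∃ Q : unitFiltration p hst p →ₗ[MonoidAlgebra (ZMod p) G]
        (twist (ZMod p) (isUnitCocycle_residueCocycle hst hlam₀) 1).asModule,
      Function.Injective Q ∧ Set.range Q = Set.range (algebraMap (ZMod p) (ResidueField A)) := by
  have hmem : lam ^ p ∈ maximalIdeal A :=
    Ideal.pow_mem_of_mem _ (mem_maximalIdeal_of_pow_eq_neg hlam) p (Fact.out : p.Prime).pos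
  let r := principalUnitsResidue (pow_ne_zero p hlam₀) hmem
  have hker (u : principalUnits (lam ^ p)) : (∃ y : Aˣ, y ^ p = u) ↔
      algebraMap (ZMod p) (ResidueField A) (Algebra.trace (ZMod p) (ResidueField A)
        (r (Additive.ofMul u))) = 0 := by
    rw [exists_pow_eq_iff_trace_principalUnitsResidue_eq_zero hlam₀ hlam hmem u,
      map_eq_zero_iff _ (algebraMap (ZMod p) (ResidueField A)).injective]
  obtain ⟨Q, hQ⟩ := exists_linearMap_classSubmodule (p := p)
    (hS := smul_mem_principalUnits (associated_pow_smul hst p))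
    (twist (ZMod p) (isUnitCocycle_residueCocycle hst hlam₀) 1)
    ((Algebra.linearMap (ZMod p) (ResidueField A) ∘ₗ
      Algebra.trace (ZMod p) (ResidueField A)).toAddMonoidHom.comp r)
    (fun u ↦ (hker u).1) fun g u ↦ by
      have htwist := algebraMap_trace_twist_card (F := ZMod p)
        (isUnitCocycle_residueCocycle hst hlam₀) (g := g)
        (by rw [ZMod.card, residueCocycle_pow_prime hst hlam₀ hlam]) (r (Additive.ofMul u))
      rw [ZMod.card] at htwist
      rw [← principalUnitsResidue_smul hst hlam₀ p hmem g u] at htwist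
      exact htwist
  refine ⟨Q, (injective_iff_map_eq_zero Q).2 ?_, ?_⟩
  · rintro ⟨_, u, hu, rfl⟩ h
    exact Subtype.ext (powClass_eq_zero_iff.2 ((hker ⟨u, hu⟩).2 ((hQ ⟨u, hu⟩).symm.trans h)))
  · apply subset_antisymm
    · rintro _ ⟨⟨_, u, hu, rfl⟩, rfl⟩
      exact ⟨_, (hQ ⟨u, hu⟩).symm⟩
    · rintro _ ⟨c, rfl⟩
      obtain ⟨x, rfl⟩ := Algebra.trace_surjective (ZMod p) (ResidueField A) c
      obtain ⟨u, rfl⟩ := principalUnitsResidue_surjective (pow_ne_zero p hlam₀) hmem x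
      exact ⟨_, hQ u.toMul⟩

theorem exists_injective_linearMap_rootsOfUnity [IsIntegrallyClosed A] (hlam₀ : lam ≠ 0)
    (hlam : lam ^ (p - 1) = -(p : A)) :
    ∃ Q : (rootsOfUnityRep p G A).asModule →ₗ[MonoidAlgebra (ZMod p) G]
        (twist (ZMod p) (isUnitCocycle_residueCocycle hst hlam₀) 1).asModule,
      Function.Injective Q ∧ Set.range Q = Set.range (algebraMap (ZMod p) (ResidueField A)) := by
  have hmem : lam ^ 1 ∈ maximalIdeal A := by
    rw [pow_one]
    exact mem_maximalIdeal_of_pow_eq_neg hlam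
  have hle := rootsOfUnity_le_principalUnits hlam₀ hlam
  let q := (principalUnitsResidue (pow_ne_zero 1 hlam₀) hmem).comp
    (MonoidHom.toAdditive (Subgroup.inclusion hle))
  have hrange : Set.range q = Set.range (algebraMap (ZMod p) (ResidueField A)) :=
    range_principalUnitsResidue_rootsOfUnity hlam₀ hlam hmem
  have hcard : Nat.card (Additive (rootsOfUnity p A)) ≤ Nat.card (Set.range q) := by
    rw [hrange, Nat.card_range_of_injective (algebraMap (ZMod p) (ResidueField A)).injective,
      Nat.card_zmod]
    exact card_rootsOfUnity A p
  have hq : Function.Injective q := Set.rangeFactorization_injective.1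
    ((Set.rangeFactorization_surjective (f := q)).bijective_of_nat_card_le hcard).1
  let Q : (rootsOfUnityRep p G A).IntertwiningMap
      (twist (ZMod p) (isUnitCocycle_residueCocycle hst hlam₀) 1) :=
    { q.toZModLinearMap p with
      isIntertwining' g := LinearMap.ext fun ζ ↦
        principalUnitsResidue_smul hst hlam₀ 1 hmem g ⟨_, hle ζ.toMul.2⟩ }
  exact ⟨Representation.IntertwiningMap.equivLinearMapAsModule _ _ Q, hq, hrange⟩

/-- Both sides are identified with the copy of `𝔽_p` in the residue field: the left one by the
trace of the residue field, the right one as the kernel of `x ↦ x ^ p - x`. -/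
theorem nonempty_unitFiltration_prime_equiv_rootsOfUnity [IsIntegrallyClosed A] (hlam₀ : lam ≠ 0)
    (hlam : lam ^ (p - 1) = -(p : A)) :
    Nonempty (unitFiltration p hst p ≃ₗ[MonoidAlgebra (ZMod p) G]
      (rootsOfUnityRep p G A).asModule) := by
  obtain ⟨Q₁, hQ₁, hrange₁⟩ := exists_injective_linearMap_unitFiltration_prime hst hlam₀ hlam
  obtain ⟨Q₂, hQ₂, hrange₂⟩ := exists_injective_linearMap_rootsOfUnity hst hlam₀ hlam
  have hrange : LinearMap.range Q₁ = LinearMap.range Q₂ :=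
    SetLike.coe_injective (hrange₁.trans hrange₂.symm)
  exact ⟨(LinearEquiv.ofInjective Q₁ hQ₁).trans
    ((LinearEquiv.ofEq _ _ hrange).trans (LinearEquiv.ofInjective Q₂ hQ₂).symm)⟩

end TopQuotient

section LocalUnits

open IsLocalRing

theorem associated_smul_of_irreducible {G A : Type*} [Group G] [CommRing A] [IsDomain A]
    [IsDiscreteValuationRing A] [MulSemiringAction G A] {π : A} (hπ : Irreducible π) (g : G) :
    Associated π (g • π) :=
  IsDiscreteValuationRing.associated_of_irreducible A hπ
    ((MulEquiv.irreducible_iff (MulSemiringAction.toRingEquiv G A g)).2 hπ)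

theorem residueCocycle_pow_eq_one {G A : Type*} [Group G] [CommRing A] [MulSemiringAction G A]
    [IsDomain A] [IsLocalRing A] {π : A} (hst : ∀ g : G, Associated π (g • π)) (hπ₀ : π ≠ 0)
    {g : G} (hg : g ∈ (MulSemiringAction.toRingAut G (ResidueField A)).ker) {κ : A} {n : ℕ}
    (hκ : Associated (π ^ n) κ) (hgκ : g • κ = κ) : residueCocycle hst g ^ n = 1 := by
  obtain ⟨v, rfl⟩ := hκ
  obtain ⟨c, hc⟩ := associated_pow_smul hst n g
  rw [smul_mul', ← hc, mul_assoc] at hgκ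
  have hcv := congrArg (residue A) (mul_left_cancel₀ (pow_ne_zero n hπ₀) hgκ)
  rw [map_mul, ResidueField.residue_smul, show g • residue A v = residue A v from
    RingEquiv.congr_fun hg _] at hcv
  refine Units.ext ((residueCocycle_pow_eq_residue hst hπ₀ hc.symm).trans ?_)
  exact (mul_eq_right₀ (v.isUnit.map (residue A)).ne_zero).1 hcv

theorem unitFiltration_eq_of_associated {p : ℕ} {G A : Type*} [Group G] [CommRing A]
    [MulSemiringAction G A] {π π' : A} {hst : ∀ g : G, Associated π (g • π)}
    {hst' : ∀ g : G, Associated π' (g • π')} {i j : ℕ} (h : Associated (π ^ i) (π' ^ j)) :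
    unitFiltration p hst i = unitFiltration p hst' j :=
  (classSubmodule_mono fun u hu ↦ ⟨1, by
      rw [one_pow, mul_one]; exact principalUnits_le_of_dvd h.dvd' hu⟩).antisymm
    (classSubmodule_mono fun u hu ↦ ⟨1, by
      rw [one_pow, mul_one]; exact principalUnits_le_of_dvd h.dvd hu⟩)

variable {p : ℕ} {A : Type u} [CommRing A] [IsDomain A]
  [IsDiscreteValuationRing A]

theorem exists_associated_pow_of_pow_eq_neg {π lam : A} [CharP (ResidueField A) p]
    (hπ : Irreducible π) (hlam₀ : lam ≠ 0) (hlam : lam ^ (p - 1) = -(p : A)) :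
    ∃ E, 0 < E ∧ Associated (π ^ E) lam ∧ Associated (π ^ ((p - 1) * E)) (p : A) := by
  obtain ⟨E, hE⟩ := IsDiscreteValuationRing.associated_pow_irreducible hlam₀ hπ
  refine ⟨E, Nat.pos_of_ne_zero ?_, hE.symm, ?_⟩
  · rintro rfl
    rw [pow_zero, associated_one_iff_isUnit] at hE
    exact mem_maximalIdeal_of_pow_eq_neg hlam hE
  · have hneg : Associated (-(p : A)) p := (Associated.refl _).neg_left
    rw [mul_comm, pow_mul]
    exact (hlam ▸ hE.symm.pow_pow).trans hneg

variable [HenselianLocalRing A] [Finite (ResidueField A)] [CharP (ResidueField A) p]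
  {G : Type u} [Group G] [MulSemiringAction G A] [Fact p.Prime]

theorem finite_and_natCard_linearMap_powClassRep_units [Algebra (ZMod p) (ResidueField A)]
    [SMulCommClass G (ZMod p) (ResidueField A)] {π lam : A} (hπ : Irreducible π)
    (hlam₀ : lam ≠ 0) (hlam : lam ^ (p - 1) = -(p : A)) {E : ℕ} (hE : Associated (π ^ E) lam)
    (hp : Associated (π ^ ((p - 1) * E)) (p : A)) (hst : ∀ g : G, Associated π (g • π))
    [∀ i, Module.Projective (MonoidAlgebra (ZMod p) G)
      (twist (ZMod p) (isUnitCocycle_residueCocycle hst hπ.ne_zero) i).asModule] :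
    Finite (powClassRep p G Aˣ).asModule ∧
      ∀ (X : Type u) [AddCommGroup X] [Module (MonoidAlgebra (ZMod p) G) X],
        Nat.card (X →ₗ[MonoidAlgebra (ZMod p) G] (powClassRep p G Aˣ).asModule) =
        Nat.card (X →ₗ[MonoidAlgebra (ZMod p) G] (rootsOfUnityRep p G A).asModule) *
          ∏ i ∈ range (p * E) with ¬ p ∣ i, Nat.card (X →ₗ[MonoidAlgebra (ZMod p) G]
            (twist (ZMod p) (isUnitCocycle_residueCocycle hst hπ.ne_zero) i).asModule) := by
  have hstl (g : G) : Associated lam (g • lam) :=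
    hE.symm.trans ((associated_pow_smul hst E g).trans
      (hE.map (MulSemiringAction.toRingHom G A g)))
  have hpE : Associated (π ^ (p * E)) (lam ^ p) := by
    rw [mul_comm, pow_mul]
    exact hE.pow_pow
  obtain ⟨eₙ⟩ := nonempty_unitFiltration_prime_equiv_rootsOfUnity hstl hlam₀ hlam
  rw [← unitFiltration_eq_of_associated (hst := hst) hpE] at eₙ
  have e₀ : unitFiltration p hst 0 ≃ₗ[MonoidAlgebra (ZMod p) G] (powClassRep p G Aˣ).asModule :=
    unitFiltration_zero (p := p) hst ▸ Submodule.topEquiv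
  have heq : ∀ i < p * E, ¬ ¬ p ∣ i →
      unitFiltration p hst i = unitFiltration p hst (i + 1) := by
    rintro _ hi h
    obtain ⟨j, rfl⟩ := not_not.1 h
    exact unitFiltration_mul_eq_succ hst hπ.maximalIdeal_eq hp.dvd (Nat.lt_of_mul_lt_mul_left hi)
  have hsplit (i) (hi : i < p * E) (hpi : ¬ p ∣ i) :=
    nonempty_unitFiltration_equiv_prod hst hπ.maximalIdeal_eq hp.dvd hπ.ne_zero hi hpi
  have (i : ℕ) : Finite (twist (ZMod p) (isUnitCocycle_residueCocycle hst hπ.ne_zero) i).asModule :=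
    ‹Finite (ResidueField A)›
  have : Finite (rootsOfUnityRep p G A).asModule := inferInstanceAs (Finite (rootsOfUnity p A))
  constructor
  · have := finite_of_filtration (unitFiltration p hst) _ _ _ heq hsplit
      (Finite.of_equiv _ eₙ.symm.toEquiv)
    exact Finite.of_equiv _ e₀.toEquiv
  · intro X _ _
    rw [← natCard_linearMap_congr e₀, ← natCard_linearMap_congr eₙ]
    exact natCard_linearMap_filtration (unitFiltration p hst) _ _ _ heq hsplit X

theorem nonempty_powClassRep_units_equiv [Finite G] (hp₀ : (p : A) ≠ 0) {π lam : A}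
    (hπ : Irreducible π) (hlam : lam ^ (p - 1) = -(p : A))
    (hI : ∀ g ∈ (MulSemiringAction.toRingAut G (ResidueField A)).ker,
      residueCocycle (associated_smul_of_irreducible hπ) g = 1 → g = 1) {d : ℕ}
    (hcard : ∀ e, Associated (π ^ e) (p : A) →
      Nat.card (ResidueField A) ^ e = p ^ (d * Nat.card G)) :
    Nonempty ((powClassRep p G Aˣ).asModule ≃ₗ[MonoidAlgebra (ZMod p) G]
      (rootsOfUnityRep p G A).asModule × (Fin d → MonoidAlgebra (ZMod p) G)) := by
  let : Algebra (ZMod p) (ResidueField A) := ZMod.algebra _ p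
  have : SMulCommClass G (ZMod p) (ResidueField A) :=
    ⟨fun g ↦ ZMod.map_smul (DistribSMul.toAddMonoidHom (ResidueField A) g)⟩
  have hp₁ : 0 < p - 1 := Nat.sub_pos_of_lt (Fact.out : p.Prime).one_lt
  have hlam₀ : lam ≠ 0 := by
    rintro rfl
    exact hp₀ (by simpa [hp₁.ne'] using hlam.symm)
  obtain ⟨E, hE₀, hE, hp⟩ := exists_associated_pow_of_pow_eq_neg hπ hlam₀ hlam
  have hst (g : G) : Associated π (g • π) := associated_smul_of_irreducible hπ g
  have hθ := isUnitCocycle_residueCocycle hst hπ.ne_zero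
  have hθE (g) (hg : g ∈ (MulSemiringAction.toRingAut G (ResidueField A)).ker) :
      residueCocycle hst g ^ ((p - 1) * E) = 1 :=
    residueCocycle_pow_eq_one hst hπ.ne_zero hg hp
      (map_natCast (MulSemiringAction.toRingHom G A g) p)
  have (i : ℕ) : Module.Projective (MonoidAlgebra (ZMod p) G) (twist (ZMod p) hθ i).asModule :=
    projective_twist hθ hI (Nat.mul_pos hp₁ hE₀) hθE
      (by rw [Nat.card_zmod]; exact hcard _ hp) i
  have : Finite (rootsOfUnityRep p G A).asModule := inferInstanceAs (Finite (rootsOfUnity p A))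
  obtain ⟨_, hM⟩ := finite_and_natCard_linearMap_powClassRep_units hπ hlam₀ hlam hE hp hst
  have : Finite (MonoidAlgebra (ZMod p) G) := Module.finite_of_finite (ZMod p)
  refine nonempty_linearEquiv_of_natCard_linearMap_eq fun X _ _ _ ↦ ?_
  let : Module (ZMod p) X := Module.compHom X (algebraMap (ZMod p) (MonoidAlgebra (ZMod p) G))
  have : IsScalarTower (ZMod p) (MonoidAlgebra (ZMod p) G) X :=
    IsScalarTower.of_algebraMap_smul fun _ _ ↦ rfl
  rw [hM, natCard_linearMap_prod, natCard_linearMap_pi,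
    prod_natCard_linearMap_twist_of_not_dvd hθ hI hθE (hcard _ hp), prod_const, card_univ,
    Fintype.card_fin, natCard_linearMap_monoidAlgebra]

end LocalUnits

section ValuationSplitting

open Representation

variable {p : ℕ} {H U : Type*} [CommGroup H] [CommGroup U] {ι : U →* H}
  {v : H →* Multiplicative ℤ} (hker : v.ker = ι.range) {κ : H}
  (hκ : IsCoprime (v κ).toAdd (p : ℤ))

include hker hκ

theorem exists_mul_zpow_mul_pow_eq (hv : Function.Surjective v) (x : H) :
    ∃ (u : U) (z : ℤ) (y : H), ι u * κ ^ z * y ^ p = x := by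
  obtain ⟨r, s, hrs⟩ := hκ
  obtain ⟨y, hy⟩ := hv (Multiplicative.ofAdd ((v x).toAdd * s))
  have hx : x * (κ ^ ((v x).toAdd * r))⁻¹ * (y ^ p)⁻¹ ∈ v.ker := by
    refine Multiplicative.toAdd.injective ?_
    simp only [map_mul, map_inv, map_zpow, map_pow, hy, toAdd_mul, toAdd_inv, toAdd_zpow,
      toAdd_pow, toAdd_ofAdd, smul_eq_mul, nsmul_eq_mul, toAdd_one]
    linear_combination (-(v x).toAdd) * hrs
  obtain ⟨u, hu⟩ := hker ▸ hx
  exact ⟨u, (v x).toAdd * r, y, by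
    rw [hu, mul_right_comm (_ * _), inv_mul_cancel_right, inv_mul_cancel_right]⟩

theorem dvd_and_exists_pow_eq_of_pow_eq_mul_zpow (hι : Function.Injective ι) [NeZero p] {u : U}
    {z : ℤ} {y : H} (h : y ^ p = ι u * κ ^ z) : (p : ℤ) ∣ z ∧ ∃ w : U, w ^ p = u := by
  have hu : v (ι u) = 1 := (hker ▸ ⟨u, rfl⟩ : ι u ∈ v.ker)
  have hval : p * (v y).toAdd = z * (v κ).toAdd := by
    simpa [hu] using congrArg (fun x ↦ (v x).toAdd) h
  obtain ⟨w, rfl⟩ := hκ.symm.dvd_of_dvd_mul_right ⟨_, hval.symm⟩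
  refine ⟨dvd_mul_right _ _, ?_⟩
  have hy : y * (κ ^ w)⁻¹ ∈ v.ker := by
    refine Multiplicative.toAdd.injective ?_
    rw [mul_assoc] at hval
    simp [mul_left_cancel₀ (Nat.cast_ne_zero.2 (NeZero.ne p)) hval]
  obtain ⟨x, hx⟩ := hker ▸ hy
  refine ⟨x, hι ?_⟩
  rw [map_pow, hx, mul_pow, h, inv_pow, mul_comm (p : ℤ), zpow_mul, zpow_natCast,
    mul_inv_cancel_right]

theorem nonempty_powClassRep_equiv_prod_trivial [NeZero p] {G : Type*} [Group G]
    [MulDistribMulAction G H] [MulDistribMulAction G U] (hι : Function.Injective ι)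
    (hιG : ∀ (g : G) u, ι (g • u) = g • ι u) (hv : Function.Surjective v)
    (hκG : ∀ g : G, g • κ = κ) :
    Nonempty ((powClassRep p G H).asModule ≃ₗ[MonoidAlgebra (ZMod p) G]
      (powClassRep p G U).asModule × (trivial (ZMod p) G (ZMod p)).asModule) := by
  let a : IntertwiningMap (powClassRep p G U) (powClassRep p G H) :=
    { (QuotientGroup.map (powMonoidHom p).range (powMonoidHom p).range ι (by
        rintro _ ⟨y, rfl⟩
        exact ⟨ι y, (map_pow ι y p).symm⟩)).toAdditive.toZModLinearMap p with
      isIntertwining' g := LinearMap.ext fun x ↦ by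
        obtain ⟨u, rfl⟩ := powClass_surjective x
        exact congrArg (fun y ↦ powClass p (Additive.ofMul y)) (hιG g u.toMul) }
  let b : IntertwiningMap (trivial (ZMod p) G (ZMod p)) (powClassRep p G H) :=
    { LinearMap.toSpanSingleton (ZMod p) _ (powClass p (Additive.ofMul κ)) with
      isIntertwining' g := LinearMap.ext fun x ↦ by
        change x • _ = powClassRep p G H g (x • _)
        rw [map_smul, powClassRep_powClass, hκG] }
  let f := (IntertwiningMap.equivLinearMapAsModule _ _ a).coprod
    (IntertwiningMap.equivLinearMapAsModule _ _ b)
  have hf (u : U) (z : ℤ) : f (powClass p (Additive.ofMul u), (z : ZMod p)) =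
      powClass p (Additive.ofMul (ι u * κ ^ z)) := by
    change powClass p (Additive.ofMul (ι u)) + (z : ZMod p) • powClass p (Additive.ofMul κ) = _
    rw [Int.cast_smul_eq_zsmul, ← map_zsmul, ← map_add]
    rfl
  refine ⟨(LinearEquiv.ofBijective f ⟨(injective_iff_map_eq_zero f).2 ?_, ?_⟩).symm⟩
  · rintro ⟨x, c⟩ h
    obtain ⟨u, rfl⟩ := powClass_surjective (p := p) (H := U) x
    obtain ⟨z, rfl⟩ := ZMod.intCast_surjective c
    obtain ⟨y, hy⟩ := powClass_eq_zero_iff.1 ((hf u.toMul z).symm.trans h)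
    obtain ⟨hz, hu⟩ := dvd_and_exists_pow_eq_of_pow_eq_mul_zpow hker hκ hι hy
    exact Prod.ext (powClass_eq_zero_iff.2 hu) ((ZMod.intCast_zmod_eq_zero_iff_dvd z p).2 hz)
  · intro x
    obtain ⟨h, rfl⟩ := powClass_surjective (p := p) (H := H) x
    obtain ⟨u, z, y, hx⟩ := exists_mul_zpow_mul_pow_eq hker hκ hv h.toMul
    have hcl : powClass p h = powClass p (Additive.ofMul (ι u * κ ^ z)) := by
      rw [← ofMul_toMul h, ← hx, ofMul_mul, map_add, powClass_eq_zero_iff.2 ⟨y, rfl⟩, add_zero]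
    exact ⟨_, (hf u z).trans hcl.symm⟩

end ValuationSplitting

section FractionField

open IsDedekindDomain

variable {A L : Type*} [CommRing A] [IsDomain A] [IsDiscreteValuationRing A] [Field L]
  [Algebra A L] [IsFractionRing A L]

theorem ker_valuationOfNeZero_maximalIdeal :
    ((IsDiscreteValuationRing.maximalIdeal A).valuationOfNeZero (K := L)).ker =
      (Units.map (algebraMap A L : A →* L)).range := by
  ext x
  have hmem := IsDiscreteValuationRing.mker_valuation_eq_isUnitSubmonoid (A := A) (K := L)
  rw [MonoidHom.mem_ker, ← WithZero.coe_inj, HeightOneSpectrum.valuationOfNeZero_eq,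
    WithZero.coe_one, ← MonoidHom.mem_mker, hmem]
  constructor
  · rintro ⟨_, ⟨u, rfl⟩, hu⟩
    exact ⟨u, Units.ext hu⟩
  · rintro ⟨u, rfl⟩
    exact ⟨u, u.isUnit, rfl⟩

theorem surjective_valuationOfNeZero (v : HeightOneSpectrum A) :
    Function.Surjective (v.valuationOfNeZero (K := L)) := by
  intro z
  obtain ⟨x, hx⟩ := v.valuation_surjective L (z : WithZero (Multiplicative ℤ))
  have hx₀ : x ≠ 0 := fun h ↦ WithZero.coe_ne_zero (hx.symm.trans (by rw [h, map_zero]))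
  exact ⟨Units.mk0 x hx₀, WithZero.coe_inj.1 ((v.valuationOfNeZero_eq _).trans hx)⟩

theorem toAdd_valuationOfNeZero_maximalIdeal {π : A} (hπ : Irreducible π) {κ : A} {m : ℕ}
    (hκ : Associated (π ^ m) κ) {x : Lˣ} (hx : (x : L) = algebraMap A L κ) :
    ((IsDiscreteValuationRing.maximalIdeal A).valuationOfNeZero x).toAdd = -m := by
  obtain ⟨u, rfl⟩ := hκ
  let v := IsDiscreteValuationRing.maximalIdeal A
  have hvπ : v.valuation L (algebraMap A L π) = WithZero.exp (-1 : ℤ) := by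
    rw [HeightOneSpectrum.valuation_of_algebraMap,
      v.intValuation_singleton hπ.ne_zero hπ.maximalIdeal_eq]
  have hvu : v.valuation L (algebraMap A L u) = 1 := by
    rw [← WithZero.coe_one, ← v.valuation_of_unit_eq (K := L) u, v.valuationOfNeZero_eq]
    rfl
  have hvx : (v.valuationOfNeZero x : WithZero (Multiplicative ℤ)) = WithZero.exp (-m : ℤ) := by
    rw [v.valuationOfNeZero_eq, hx, map_mul, map_mul, hvu, mul_one, map_pow, map_pow, hvπ,
      ← WithZero.exp_nsmul, nsmul_eq_mul, mul_neg_one]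
  exact congrArg Multiplicative.toAdd (WithZero.coe_inj.1 hvx)

end FractionField

section FractionFieldPowClass

open IsDedekindDomain IsLocalRing

theorem nonempty_rootsOfUnityRep_equiv {p : ℕ} [NeZero p] {G A B : Type*} [Group G] [CommRing A]
    [CommRing B] [Algebra A B] [IsIntegrallyClosedIn A B] [MulSemiringAction G A]
    [MulSemiringAction G B]
    (hAB : ∀ (g : G) (a : A), algebraMap A B (g • a) = g • algebraMap A B a) :
    Nonempty ((rootsOfUnityRep p G A).asModule ≃ₗ[MonoidAlgebra (ZMod p) G]
      (rootsOfUnityRep p G B).asModule) := by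
  let f := restrictRootsOfUnity (algebraMap A B) p
  have hinj : Function.Injective f := fun x y h ↦ Subtype.ext <| Units.ext <|
    IsIntegralClosure.algebraMap_injective A A B (congrArg (fun z ↦ (z.1 : B)) h)
  have hsurj : Function.Surjective f := fun ζ ↦ by
    have hζ : ((ζ : Bˣ) : B) ^ p = 1 := (mem_rootsOfUnity' p _).1 ζ.2
    obtain ⟨y, hy⟩ := IsIntegrallyClosedIn.exists_algebraMap_eq_of_isIntegral_pow (R := A)
      (NeZero.pos p) (hζ ▸ isIntegral_one)
    have hyp : y ^ p = 1 := IsIntegralClosure.algebraMap_injective A A B (by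
      rw [map_pow, hy, hζ, map_one])
    exact ⟨rootsOfUnity.mkOfPowEq y hyp, Subtype.ext (Units.ext hy)⟩
  let F : (rootsOfUnityRep p G A).IntertwiningMap (rootsOfUnityRep p G B) :=
    { f.toAdditive.toZModLinearMap p with
      isIntertwining' g := LinearMap.ext fun ζ ↦
        congrArg Additive.ofMul (Subtype.ext (Units.ext (hAB g ((ζ.toMul : Aˣ) : A)))) }
  exact ⟨LinearEquiv.ofBijective (Representation.IntertwiningMap.equivLinearMapAsModule _ _ F)
    ⟨hinj, hsurj⟩⟩

theorem nonempty_powClassRep_fractionField_equiv {p : ℕ} [Fact p.Prime] {G A : Type u} {L : Type*}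
    [Group G] [Finite G] [CommRing A] [IsDomain A] [IsDiscreteValuationRing A]
    [HenselianLocalRing A] [Finite (ResidueField A)] [CharP (ResidueField A) p]
    [MulSemiringAction G A] [Field L] [Algebra A L] [IsFractionRing A L] [MulSemiringAction G L]
    (hAL : ∀ (g : G) (a : A), algebraMap A L (g • a) = g • algebraMap A L a)
    (hp₀ : (p : A) ≠ 0) {π lam : A} (hπ : Irreducible π) (hlam : lam ^ (p - 1) = -(p : A))
    (hI : ∀ g ∈ (MulSemiringAction.toRingAut G (ResidueField A)).ker,
      residueCocycle (associated_smul_of_irreducible hπ) g = 1 → g = 1)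
    {d : ℕ} (hcard : ∀ e, Associated (π ^ e) (p : A) →
      Nat.card (ResidueField A) ^ e = p ^ (d * Nat.card G))
    {κ : A} (hκ : ∀ g : G, g • κ = κ) {m : ℕ} (hm : Associated (π ^ m) κ) (hpm : p.Coprime m) :
    Nonempty ((powClassRep p G Lˣ).asModule ≃ₗ[MonoidAlgebra (ZMod p) G]
      (rootsOfUnityRep p G L).asModule × (Fin d → MonoidAlgebra (ZMod p) G) ×
        (Representation.trivial (ZMod p) G (ZMod p)).asModule) := by
  have hκ₀ : algebraMap A L κ ≠ 0 := (map_ne_zero_iff _ (IsFractionRing.injective A L)).2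
    (hm.ne_zero_iff.1 (pow_ne_zero _ hπ.ne_zero))
  have hcop : IsCoprime ((IsDiscreteValuationRing.maximalIdeal A).valuationOfNeZero
      (Units.mk0 _ hκ₀)).toAdd (p : ℤ) := by
    rw [toAdd_valuationOfNeZero_maximalIdeal hπ hm rfl, IsCoprime.neg_left_iff]
    exact Nat.isCoprime_iff_coprime.2 hpm.symm
  obtain ⟨e⟩ := nonempty_powClassRep_equiv_prod_trivial (G := G)
    ker_valuationOfNeZero_maximalIdeal hcop
    (Units.map_injective (IsFractionRing.injective A L)) (fun g u ↦ Units.ext (hAL g u))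
    (surjective_valuationOfNeZero _) (fun g ↦ Units.ext ((hAL g κ).symm.trans (by rw [hκ]; rfl)))
  obtain ⟨eA⟩ := nonempty_powClassRep_units_equiv hp₀ hπ hlam hI hcard
  obtain ⟨eμ⟩ := nonempty_rootsOfUnityRep_equiv (p := p) hAL
  exact ⟨e.trans (((eA.trans (eμ.prodCongr (.refl _ _))).prodCongr (.refl _ _)).trans
    (LinearEquiv.prodAssoc _ _ _ _))⟩

end FractionFieldPowClass

section LocalFieldOfNorm

open ValuativeRel

variable {K : Type*} [NontriviallyNormedField K] [IsUltrametricDist K]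

theorem isNonarchimedeanLocalField_ofValuation_norm [LocallyCompactSpace K] :
    let _ := ValuativeRel.ofValuation (NormedField.valuation (K := K))
    IsNonarchimedeanLocalField K := by
  let _ := ValuativeRel.ofValuation (NormedField.valuation (K := K))
  have : (NormedField.valuation (K := K)).Compatible := .ofValuation _
  let _ : Valued K NNReal := NormedField.toValued
  have htop : IsValuativeTopology K :=
    IsValuativeTopology.of_mem_nhds_iff_vle (NormedField.valuation (K := K)) Valued.mem_nhds
  have hnontrivial : ValuativeRel.IsNontrivial K :=
    (isNontrivial_iff_isNontrivial (NormedField.valuation (K := K))).2 inferInstance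
  exact { htop, hnontrivial, ‹LocallyCompactSpace K› with }

theorem mem_integer_ofValuation_norm_iff {x : K} :
    let _ := ValuativeRel.ofValuation (NormedField.valuation (K := K))
    x ∈ 𝒪[K] ↔ ‖x‖ ≤ 1 := by
  let _ := ValuativeRel.ofValuation (NormedField.valuation (K := K))
  have : (NormedField.valuation (K := K)).Compatible := .ofValuation _
  exact (isEquiv (valuation K) NormedField.valuation).le_one_iff_le_one

end LocalFieldOfNorm

section IntegralClosurePadic

variable {p : ℕ} [Fact p.Prime] {F : Type*} [Field F] [Algebra ℚ_[p] F] [Algebra ℤ_[p] F]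
  [IsScalarTower ℤ_[p] ℚ_[p] F]

theorem spectralNorm_le_one_iff_isIntegral [Algebra.IsAlgebraic ℚ_[p] F] {x : F} :
    spectralNorm ℚ_[p] F x ≤ 1 ↔ IsIntegral ℤ_[p] x := by
  have hx : IsIntegral ℚ_[p] x := Algebra.IsIntegral.isIntegral x
  rw [spectralNorm, spectralValue_le_one_iff (minpoly.monic hx)]
  constructor
  · intro h
    have hlifts : minpoly ℚ_[p] x ∈ Polynomial.lifts (algebraMap ℤ_[p] ℚ_[p]) :=
      (Polynomial.lifts_iff_coeff_lifts _).2 fun n ↦ ⟨⟨_, h n⟩, rfl⟩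
    obtain ⟨q, hq, -, hmonic⟩ :=
      Polynomial.lifts_and_natDegree_eq_and_monic hlifts (minpoly.monic hx)
    refine ⟨q, hmonic, ?_⟩
    rw [← Polynomial.aeval_def, ← Polynomial.aeval_map_algebraMap ℚ_[p], hq, minpoly.aeval]
  · intro h n
    rw [minpoly.isIntegrallyClosed_eq_field_fractions' ℚ_[p] h, Polynomial.coeff_map]
    exact ((minpoly ℤ_[p] x).coeff n).2

theorem exists_isNonarchimedeanLocalField [FiniteDimensional ℚ_[p] F] :
    ∃ (_ : ValuativeRel F) (_ : UniformSpace F) (_ : IsUniformAddGroup F),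
      IsNonarchimedeanLocalField F ∧
        (ValuativeRel.valuation F).integer = (integralClosure ℤ_[p] F).toSubring := by
  let _ := spectralNorm.nontriviallyNormedField ℚ_[p] F
  let _ := spectralNorm.normedAlgebra ℚ_[p] F
  have : IsUltrametricDist F := IsUltrametricDist.isUltrametricDist_of_isNonarchimedean_norm
    isNonarchimedean_spectralNorm
  have : ProperSpace F := FiniteDimensional.proper ℚ_[p] F
  refine ⟨_, inferInstance, inferInstance, isNonarchimedeanLocalField_ofValuation_norm,
    Subring.ext fun x ↦ mem_integer_ofValuation_norm_iff.trans spectralNorm_le_one_iff_isIntegral⟩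

end IntegralClosurePadic

section Henselian

open IsLocalRing

theorem henselianLocalRing_of_isAdicComplete (R : Type*) [CommRing R] [IsLocalRing R]
    [IsAdicComplete (maximalIdeal R) R] : HenselianLocalRing R where
  is_henselian f hf a₀ h₁ h₂ :=
    HenselianRing.is_henselian (I := maximalIdeal R) f hf a₀ h₁ (h₂.map _)

end Henselian

section QuotientCard

open IsLocalRing

theorem natCard_quotient_map_maximalIdeal (R S : Type*) [CommRing R] [IsLocalRing R] [CommRing S]
    [Algebra R S] [Module.Finite R S] [Module.Free R S] :
    Nat.card (S ⧸ (maximalIdeal R).map (algebraMap R S)) =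
      Nat.card (ResidueField R) ^ Module.finrank R S := by
  let _ := Ideal.Quotient.field (maximalIdeal R)
  have : Module.Finite (R ⧸ maximalIdeal R) (S ⧸ (maximalIdeal R).map (algebraMap R S)) :=
    .of_restrictScalars_finite R _ _
  rw [← finrank_quotient_map]
  exact Module.natCard_eq_pow_finrank (K := R ⧸ maximalIdeal R)

end QuotientCard

section IntegralClosurePadicDVR

open IsLocalRing

variable {p : ℕ} [Fact p.Prime] {F : Type*} [Field F] [Algebra ℚ_[p] F] [FiniteDimensional ℚ_[p] F]
  [Algebra ℤ_[p] F] [IsScalarTower ℤ_[p] ℚ_[p] F]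

instance isDiscreteValuationRing_integralClosure :
    IsDiscreteValuationRing (integralClosure ℤ_[p] F) := by
  obtain ⟨_, _, _, _, h⟩ := exists_isNonarchimedeanLocalField (p := p) (F := F)
  change IsDiscreteValuationRing (integralClosure ℤ_[p] F).toSubring
  rw [← h]
  infer_instance

instance henselianLocalRing_integralClosure : HenselianLocalRing (integralClosure ℤ_[p] F) := by
  obtain ⟨_, _, _, _, h⟩ := exists_isNonarchimedeanLocalField (p := p) (F := F)
  change HenselianLocalRing (integralClosure ℤ_[p] F).toSubring
  rw [← h]
  exact henselianLocalRing_of_isAdicComplete _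

instance moduleFinite_integralClosure : Module.Finite ℤ_[p] (integralClosure ℤ_[p] F) :=
  IsIntegralClosure.finite ℤ_[p] ℚ_[p] F _

instance faithfulSMul_integralClosure : FaithfulSMul ℤ_[p] (integralClosure ℤ_[p] F) :=
  have := FaithfulSMul.trans ℤ_[p] ℚ_[p] F
  inferInstance

instance finite_residueField_integralClosure :
    Finite (ResidueField (integralClosure ℤ_[p] F)) :=
  have : Algebra.IsIntegral ℤ_[p] (ResidueField (integralClosure ℤ_[p] F)) := inferInstance
  Module.finite_of_finite (ResidueField ℤ_[p])

theorem natCast_prime_integralClosure_ne_zero : (p : integralClosure ℤ_[p] F) ≠ 0 := by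
  have := charZero_of_injective_algebraMap
    (FaithfulSMul.algebraMap_injective ℤ_[p] (integralClosure ℤ_[p] F))
  exact Nat.cast_ne_zero.2 (NeZero.ne p)

theorem not_isUnit_natCast_prime_integralClosure : ¬ IsUnit (p : integralClosure ℤ_[p] F) := by
  rw [← map_natCast (algebraMap ℤ_[p] (integralClosure ℤ_[p] F)), isUnit_map_iff]
  exact PadicInt.p_nonunit

instance charP_residueField_integralClosure :
    CharP (ResidueField (integralClosure ℤ_[p] F)) p := by
  rw [CharP.charP_iff_prime_eq_zero Fact.out, ← map_natCast (residue _), residue_eq_zero_iff]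
  exact not_isUnit_natCast_prime_integralClosure

theorem map_maximalIdeal_padicInt {ϖ : integralClosure ℤ_[p] F} (hϖ : Irreducible ϖ) {e : ℕ}
    (he : Associated (ϖ ^ e) (p : integralClosure ℤ_[p] F)) :
    (maximalIdeal ℤ_[p]).map (algebraMap ℤ_[p] (integralClosure ℤ_[p] F)) =
      maximalIdeal (integralClosure ℤ_[p] F) ^ e := by
  rw [PadicInt.maximalIdeal_eq_span_p, Ideal.map_span, Set.image_singleton, map_natCast,
    hϖ.maximalIdeal_eq, Ideal.span_singleton_pow, Ideal.span_singleton_eq_span_singleton]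
  exact he.symm

theorem natCard_residueField_integralClosure_pow {ϖ : integralClosure ℤ_[p] F} (hϖ : Irreducible ϖ)
    {e : ℕ} (he : Associated (ϖ ^ e) (p : integralClosure ℤ_[p] F)) :
    Nat.card (ResidueField (integralClosure ℤ_[p] F)) ^ e = p ^ Module.finrank ℚ_[p] F := by
  have := FaithfulSMul.trans ℤ_[p] ℚ_[p] F
  have : Module.Free ℤ_[p] (integralClosure ℤ_[p] F) :=
    IsIntegralClosure.module_free ℤ_[p] ℚ_[p] F _
  calc Nat.card (ResidueField (integralClosure ℤ_[p] F)) ^ e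
      = Nat.card (integralClosure ℤ_[p] F ⧸ maximalIdeal (integralClosure ℤ_[p] F) ^ e) :=
        (cardQuot_pow_of_prime (IsDiscreteValuationRing.not_a_field _)).symm
    _ = Nat.card (ResidueField ℤ_[p]) ^ Module.finrank ℤ_[p] (integralClosure ℤ_[p] F) := by
        rw [← map_maximalIdeal_padicInt hϖ he, natCard_quotient_map_maximalIdeal]
    _ = p ^ Module.finrank ℚ_[p] F := by
        rw [IsIntegralClosure.rank ℤ_[p] ℚ_[p] F, Nat.card_congr PadicInt.residueField.toEquiv,
          Nat.card_zmod]

end IntegralClosurePadicDVR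

section PrimeToResidueCharacteristic

open IsLocalRing

theorem eq_one_of_pow_eq_one_of_residue_eq_one {A : Type*} [CommRing A] [IsDomain A]
    [IsLocalRing A] {t : ℕ} (ht : (t : ResidueField A) ≠ 0) {a : A} (ha : a ^ t = 1)
    (hres : residue A a = 1) : a = 1 := by
  have hgeom : (a - 1) * ∑ i ∈ range t, a ^ i = 0 := by rw [mul_geom_sum, ha, sub_self]
  refine sub_eq_zero.1 ((mul_eq_zero.1 hgeom).resolve_right fun h ↦ ht ?_)
  simpa [map_sum, map_pow, hres] using congrArg (residue A) h

theorem exists_pow_eq_of_residue_eq_one {A : Type*} [CommRing A] [HenselianLocalRing A] {t : ℕ}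
    (ht : (t : ResidueField A) ≠ 0) {w : A} (hw : residue A w = 1) : ∃ v, v ^ t = w := by
  have ht₀ : t ≠ 0 := by rintro rfl; exact ht Nat.cast_zero
  obtain ⟨v, hv, -⟩ := HenselianLocalRing.is_henselian (Polynomial.X ^ t - Polynomial.C w)
    (Polynomial.monic_X_pow_sub_C w ht₀) 1
    (by rw [← residue_eq_zero_iff]; simp [hw])
    (by rw [← residue_ne_zero_iff_isUnit]; simpa [Polynomial.derivative_X_pow] using ht)
  exact ⟨v, sub_eq_zero.1 (by simpa [Polynomial.IsRoot] using hv)⟩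

theorem exists_mul_pow_eq_of_residue_eq {A : Type*} [CommRing A] [HenselianLocalRing A] {t : ℕ}
    (ht : (t : ResidueField A) ≠ 0) {u v : Aˣ}
    (huv : Units.map (residue A : A →* ResidueField A) u = Units.map (residue A : A →* _) v) :
    ∃ w : Aˣ, v * w ^ t = u := by
  have ht₀ : t ≠ 0 := by rintro rfl; exact ht Nat.cast_zero
  have hres : residue A ((v⁻¹ * u : Aˣ) : A) = 1 := by
    have h : Units.map (residue A : A →* ResidueField A) (v⁻¹ * u) = 1 := by
      rw [map_mul, map_inv, huv, inv_mul_cancel]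
    exact congrArg Units.val h
  obtain ⟨w, hw⟩ := exists_pow_eq_of_residue_eq_one ht hres
  obtain ⟨w, rfl⟩ := (isUnit_pow_iff ht₀).1 (hw ▸ (v⁻¹ * u).isUnit)
  have hwt : w ^ t = v⁻¹ * u := Units.ext hw
  exact ⟨w, by rw [hwt, mul_inv_cancel_left]⟩

variable {A L : Type*} [CommRing A] [IsDomain A] [IsDiscreteValuationRing A] [Field L]
  [Algebra A L] [IsFractionRing A L]

theorem exists_map_units_mul_zpow_eq {π : A} (hπ : Irreducible π) (x : Lˣ) :
    ∃ (u : Aˣ) (z : ℤ), Units.map (algebraMap A L : A →* L) u *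
      Units.mk0 (algebraMap A L π) (by simpa using hπ.ne_zero) ^ z = x := by
  obtain ⟨z, u, hx⟩ :=
    IsDiscreteValuationRing.exists_units_eq_smul_zpow_of_irreducible hπ x.ne_zero
  exact ⟨u, z, Units.ext (by simp [hx, Units.smul_def, Algebra.smul_def])⟩

theorem finite_quotient_range_powMonoidHom [HenselianLocalRing A] [Finite (ResidueField A)] {t : ℕ}
    (ht : (t : ResidueField A) ≠ 0) : Finite (Lˣ ⧸ (powMonoidHom t : Lˣ →* Lˣ).range) := by
  have ht₀ : (0 : ℤ) < t := by
    exact_mod_cast Nat.pos_of_ne_zero fun h : t = 0 ↦ ht (by rw [h, Nat.cast_zero])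
  obtain ⟨π, hπ⟩ := IsDiscreteValuationRing.exists_irreducible A
  have hlift := surjective_units_map_of_local_ringHom (residue A) residue_surjective inferInstance
  let ϖ : Lˣ := Units.mk0 (algebraMap A L π) (by simpa using hπ.ne_zero)
  let ι : Aˣ →* Lˣ := Units.map (algebraMap A L : A →* L)
  refine Finite.of_surjective (fun q : (ResidueField A)ˣ × Fin t ↦
    (ι (Function.surjInv hlift q.1) * ϖ ^ (q.2 : ℕ) : Lˣ ⧸ (powMonoidHom t).range)) fun x ↦ ?_
  obtain ⟨x, rfl⟩ := QuotientGroup.mk_surjective x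
  obtain ⟨u, z, rfl⟩ := exists_map_units_mul_zpow_eq hπ x
  obtain ⟨w, hw⟩ := exists_mul_pow_eq_of_residue_eq ht (Function.surjInv_eq hlift
    (Units.map (residue A : A →* ResidueField A) u)).symm
  have hzt := Int.emod_nonneg z ht₀.ne'
  have hz : ϖ ^ (z % t).toNat * (ϖ ^ (z / t)) ^ t = ϖ ^ z := by
    rw [← zpow_natCast, ← zpow_natCast, ← zpow_mul, ← zpow_add, Int.toNat_of_nonneg hzt,
      Int.emod_add_ediv_mul]
  refine ⟨⟨Units.map (residue A : A →* ResidueField A) u, (z % t).toNat, ?_⟩,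
    QuotientGroup.eq.2 ⟨ι w * ϖ ^ (z / t), ?_⟩⟩
  · exact (Int.toNat_lt hzt).2 (Int.emod_lt_of_pos z ht₀)
  · rw [powMonoidHom_apply, eq_inv_mul_iff_mul_eq, mul_pow, mul_mul_mul_comm, hz, ← map_pow,
      ← map_mul, hw]

end PrimeToResidueCharacteristic

section TameInertia

open IsLocalRing

theorem dvd_natCard_ker_toRingAut (G k l : Type*) [Group G] [Field k] [Field l] [Finite l]
    [Algebra k l] [MulSemiringAction G l] [SMulCommClass G k l] {m : ℕ}
    (hm : Nat.card l ^ m = Nat.card k ^ Nat.card G) :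
    m ∣ Nat.card (MulSemiringAction.toRingAut G l).ker := by
  have : Finite k := Finite.of_injective _ (algebraMap k l).injective
  let f := MulSemiringAction.toAlgAut G k l
  have hker : (MulSemiringAction.toRingAut G l).ker = f.ker := by
    ext g
    simp [f, MonoidHom.mem_ker, DFunLike.ext_iff]
  obtain ⟨r, hr⟩ := Subgroup.card_subgroup_dvd_card f.range
  rw [IsGalois.card_aut_eq_finrank] at hr
  rw [Module.natCard_eq_pow_finrank (K := k), ← pow_mul, hr, ← f.ker.index_mul_card,
    Subgroup.index_ker] at hm
  have hmr := Nat.pow_right_injective (Finite.one_lt_card (α := k)) hm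
  rw [mul_assoc] at hmr
  rw [hker, ← Nat.eq_of_mul_eq_mul_left Nat.card_pos hmr]
  exact dvd_mul_left m r

variable {G A : Type*} [Group G] [CommRing A] [IsDomain A] [IsDiscreteValuationRing A]
  [MulSemiringAction G A] {π : A} (hπ : Irreducible π)

theorem exists_residue_eq_one_and_smul_eq_mul {L : Type*} [Field L] [Algebra A L]
    [IsFractionRing A L] [MulSemiringAction G L]
    (hAL : ∀ (g : G) (a : A), algebraMap A L (g • a) = g • algebraMap A L a) {g : G}
    (hg : g ∈ (MulSemiringAction.toRingAut G (ResidueField A)).ker)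
    (hgπ : residueCocycle (associated_smul_of_irreducible hπ) g = 1) (x : Lˣ) :
    ∃ η : Aˣ, residue A η = 1 ∧ g • (x : L) = x * algebraMap A L η := by
  let ι : Aˣ →* Lˣ := Units.map (algebraMap A L : A →* L)
  let S : Subgroup Lˣ := ((Units.map (residue A : A →* ResidueField A)).ker.map ι).comap
    (MulDistribMulAction.toMonoidHom Lˣ g / MonoidHom.id Lˣ)
  suffices hx : x ∈ S by
    obtain ⟨η, hη, hηx⟩ := hx
    exact ⟨η, congrArg Units.val hη, congrArg Units.val (eq_mul_of_div_eq' hηx.symm)⟩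
  obtain ⟨u, z, rfl⟩ := exists_map_units_mul_zpow_eq (L := L) hπ x
  have hu : residue A ((g • u : Aˣ) : A) = residue A u := by
    rw [Units.coe_smul, ResidueField.residue_smul]
    exact DFunLike.congr_fun hg (residue A u)
  have hgπc := (associated_smul_of_irreducible hπ g).choose_spec
  refine mul_mem ⟨g • u / u, ?_, ?_⟩ (zpow_mem ?_ z)
  · exact (map_div _ _ _).trans (div_eq_one.2 (Units.ext hu))
  · exact (map_div ι _ _).trans (congrArg (· / ι u) (Units.ext (hAL g u)))
  · refine ⟨_, hgπ, eq_div_of_mul_eq'' (Units.ext ?_)⟩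
    exact (map_mul _ _ _).symm.trans ((congrArg (algebraMap A L) hgπc).trans (hAL g π))

theorem eq_one_of_mem_ker_of_residueCocycle_eq_one {L : Type*} [Field L] [Algebra A L]
    [IsFractionRing A L] [MulSemiringAction G L]
    (hAL : ∀ (g : G) (a : A), algebraMap A L (g • a) = g • algebraMap A L a) {t : ℕ}
    (ht : (t : ResidueField A) ≠ 0)
    (hfix : ∀ g : G, (∀ x : L, g • x ^ t = x ^ t → g • x = x) → g = 1) {g : G}
    (hg : g ∈ (MulSemiringAction.toRingAut G (ResidueField A)).ker)
    (hgπ : residueCocycle (associated_smul_of_irreducible hπ) g = 1) : g = 1 := by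
  refine hfix g fun x hx ↦ ?_
  rcases eq_or_ne x 0 with rfl | hx₀
  · exact smul_zero g
  obtain ⟨η, hη, hgx⟩ := exists_residue_eq_one_and_smul_eq_mul hπ hAL hg hgπ (Units.mk0 x hx₀)
  rw [Units.val_mk0] at hgx
  rw [smul_pow', hgx, mul_pow, mul_eq_left₀ (pow_ne_zero t hx₀), ← map_pow] at hx
  have hηt := IsFractionRing.injective A L (hx.trans (map_one _).symm)
  rw [hgx, eq_one_of_pow_eq_one_of_residue_eq_one ht hηt hη, map_one, mul_one]

theorem coprime_natCard_ker_toRingAut [Finite G] {p : ℕ} [Fact p.Prime]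
    [CharP (ResidueField A) p]
    (hI : ∀ g ∈ (MulSemiringAction.toRingAut G (ResidueField A)).ker,
      residueCocycle (associated_smul_of_irreducible hπ) g = 1 → g = 1) :
    p.Coprime (Nat.card (MulSemiringAction.toRingAut G (ResidueField A)).ker) := by
  obtain ⟨τ, -, -, hτ⟩ := (isUnitCocycle_residueCocycle (associated_smul_of_irreducible hπ)
    hπ.ne_zero).exists_generator_isPrimitiveRoot hI
  have := hτ.neZero'
  rw [(Fact.out : p.Prime).coprime_iff_not_dvd, ← CharP.cast_eq_zero_iff (ResidueField A)]
  exact NeZero.ne _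

theorem coprime_of_natCard_residueField_pow_eq [Finite G] [Finite (ResidueField A)] {p : ℕ}
    [Fact p.Prime] [CharP (ResidueField A) p] {R : Type*} [CommRing R] [IsLocalRing R]
    [Algebra R A] [IsLocalHom (algebraMap R A)] [SMulCommClass G R A]
    (hI : ∀ g ∈ (MulSemiringAction.toRingAut G (ResidueField A)).ker,
      residueCocycle (associated_smul_of_irreducible hπ) g = 1 → g = 1) {m : ℕ}
    (hm : Nat.card (ResidueField A) ^ m = Nat.card (ResidueField R) ^ Nat.card G) :
    p.Coprime m := by
  have : SMulCommClass G (ResidueField R) (ResidueField A) := ⟨fun g r a ↦ by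
    obtain ⟨r, rfl⟩ := residue_surjective r
    obtain ⟨a, rfl⟩ := residue_surjective a
    rw [Algebra.smul_def, Algebra.smul_def, ResidueField.algebraMap_residue, ← map_mul,
      ← ResidueField.residue_smul, ← ResidueField.residue_smul, ← map_mul, ← Algebra.smul_def,
      ← Algebra.smul_def, smul_comm]⟩
  exact (coprime_natCard_ker_toRingAut hπ hI).coprime_dvd_right
    (dvd_natCard_ker_toRingAut G (ResidueField R) (ResidueField A) hm)

end TameInertia

section KummerExtension

open IntermediateField

variable {K Ω : Type*} [Field K] [Field Ω] [Algebra K Ω] (E : IntermediateField K Ω) (t : ℕ)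

/-- The subfield of `Ω` generated over `K` by the `t`-th roots of all elements of `E`. If `E`
contains the `t`-th roots of unity it is the largest Kummer extension of `E` of exponent `t`. -/
def kummerExtension : IntermediateField K Ω := adjoin K {x | x ^ t ∈ E}

variable {E t}

theorem mem_kummerExtension_of_pow_mem {x : Ω} (hx : x ^ t ∈ E) : x ∈ kummerExtension E t :=
  subset_adjoin K _ hx

theorem le_kummerExtension : E ≤ kummerExtension E t := fun _ hx ↦
  mem_kummerExtension_of_pow_mem (pow_mem hx t)

theorem sup_adjoin_pow_mem_eq_kummerExtension :
    E ⊔ adjoin K {x : Ω | x ^ t ∈ E} = kummerExtension E t :=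
  sup_eq_right.2 le_kummerExtension

theorem finiteDimensional_kummerExtension [Algebra.IsAlgebraic K Ω] [FiniteDimensional K E]
    (ht : t ≠ 0) [Finite (Eˣ ⧸ (powMonoidHom t : Eˣ →* Eˣ).range)] :
    FiniteDimensional K (kummerExtension E t) := by
  let T : Set Ω := ⋃ q : Eˣ ⧸ (powMonoidHom t : Eˣ →* Eˣ).range, {x | x ^ t = (q.out : E)}
  classical
  have hT : T.Finite := Set.finite_iUnion fun q ↦
    (Polynomial.nthRoots t ((q.out : E) : Ω)).toFinset.finite_toSet.subset fun x hx ↦ by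
      simpa [Polynomial.mem_nthRoots (Nat.pos_of_ne_zero ht)] using hx
  have := hT.to_subtype
  have : FiniteDimensional K (adjoin K T) :=
    finiteDimensional_adjoin fun x _ ↦ Algebra.IsIntegral.isIntegral x
  suffices hle : kummerExtension E t ≤ E ⊔ adjoin K T from
    FiniteDimensional.of_injective (inclusion hle).toLinearMap (inclusion hle).injective
  refine adjoin_le_iff.2 fun x hx ↦ ?_
  rcases eq_or_ne x 0 with rfl | hx₀
  · exact zero_mem _
  let a : Eˣ := Units.mk0 ⟨x ^ t, hx⟩ fun h ↦ pow_ne_zero t hx₀ (congrArg Subtype.val h)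
  let q : Eˣ ⧸ (powMonoidHom t : Eˣ →* Eˣ).range := a
  obtain ⟨y, hy⟩ := QuotientGroup.eq.1 q.out_eq
  have hxy : (q.out : E) * (y : E) ^ t = x ^ t :=
    congrArg (fun u : Eˣ ↦ ((u : E) : Ω)) (eq_inv_mul_iff_mul_eq.1 hy)
  have hy₀ : ((y : E) : Ω) ≠ 0 := (map_ne_zero E.val).2 y.ne_zero
  have hxyT : x / (y : E) ∈ T := Set.mem_iUnion.2 ⟨q, by
    rw [Set.mem_ofPred_eq, div_pow, ← hxy, mul_div_cancel_right₀ _ (pow_ne_zero t hy₀)]⟩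
  rw [← div_mul_cancel₀ x hy₀]
  exact mul_mem ((le_sup_right : _ ≤ E ⊔ adjoin K T) (subset_adjoin K T hxyT))
    ((le_sup_left : E ≤ _) (y : E).2)

theorem normal_kummerExtension [Normal K Ω] [Normal K E] : Normal K (kummerExtension E t) := by
  refine normal_iff_forall_map_le.2 fun σ ↦ ?_
  rw [kummerExtension, adjoin_map]
  refine adjoin.mono _ _ _ ?_
  rintro _ ⟨x, hx, rfl⟩
  change σ x ^ t ∈ E
  exact map_pow σ x t ▸ normal_iff_forall_map_le.1 ‹_› σ ⟨_, hx, rfl⟩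

theorem eq_one_of_forall_apply_pow_eq {s : Set Ω} (hE : E = adjoin K s)
    (hs : ∀ x ∈ s, x ^ t = 1) {σ : kummerExtension E t ≃ₐ[K] kummerExtension E t}
    (hσ : ∀ x : kummerExtension E t, σ (x ^ t) = x ^ t → σ x = x) : σ = 1 := by
  have hfixE (x : Ω) (hx : x ∈ E) :
      σ ⟨x, le_kummerExtension hx⟩ = ⟨x, le_kummerExtension hx⟩ := by
    refine DFunLike.congr_fun (algHom_ext_of_eq_adjoin K hE
      (φ₁ := (σ : kummerExtension E t →ₐ[K] kummerExtension E t).comp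
        (inclusion le_kummerExtension)) (φ₂ := inclusion le_kummerExtension) fun y hy ↦ ?_) ⟨x, hx⟩
    have hyE : y ∈ E := hE ▸ subset_adjoin K s hy
    have hyt : (⟨y, le_kummerExtension hyE⟩ : kummerExtension E t) ^ t = 1 :=
      Subtype.ext (hs y hy)
    exact hσ _ (hyt ▸ map_one σ)
  refine AlgEquiv.coe_toAlgHom_injective (algHom_ext_of_eq_adjoin K rfl fun x hx ↦ ?_)
  exact hσ _ (hfixE (x ^ t) hx)

end KummerExtension

section PadicTower

open IsLocalRing

/-- The inclusion of integral closures in a tower `A → B`, as an algebra structure. -/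
abbrev integralClosureAlgebra (R A B : Type*) [CommRing R] [CommRing A] [CommRing B] [Algebra R A]
    [Algebra R B] [Algebra A B] [IsScalarTower R A B] :
    Algebra (integralClosure R A) (integralClosure R B) :=
  (IsScalarTower.toAlgHom R A B).mapIntegralClosure.toAlgebra

attribute [local instance] integralClosureAlgebra

instance isLocalHom_algebraMap_integralClosure (R K L : Type*) [CommRing R] [Field K] [Field L]
    [Algebra R K] [Algebra R L] [Algebra K L] [IsScalarTower R K L] :
    IsLocalHom (algebraMap (integralClosure R K) (integralClosure R L)) :=
  have : IsScalarTower R (integralClosure R K) (integralClosure R L) :=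
    .of_algebraMap_eq' (IsScalarTower.toAlgHom R K L).mapIntegralClosure.comp_algebraMap.symm
  have : Algebra.IsIntegral (integralClosure R K) (integralClosure R L) :=
    Algebra.IsIntegral.tower_top R
  have : FaithfulSMul (integralClosure R K) (integralClosure R L) :=
    (faithfulSMul_iff_algebraMap_injective _ _).2 fun _ _ h ↦
      Subtype.ext ((algebraMap K L).injective (congrArg Subtype.val h))
  inferInstance

variable {p : ℕ} [Fact p.Prime] {K : Type*} {L : Type u} [Field K] [Field L] [Algebra ℚ_[p] K]
  [Algebra ℚ_[p] L] [Algebra K L] [Algebra ℤ_[p] K] [IsScalarTower ℤ_[p] ℚ_[p] K]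
  [Algebra ℤ_[p] L] [IsScalarTower ℤ_[p] ℚ_[p] L] [IsScalarTower ℤ_[p] K L]
  [FiniteDimensional ℚ_[p] K] [FiniteDimensional ℚ_[p] L] [IsScalarTower ℚ_[p] K L]

theorem natCard_residueField_integralClosure_pow_eq
    {π : integralClosure ℤ_[p] K} (hπ : Irreducible π)
    {ϖ : integralClosure ℤ_[p] L} (hϖ : Irreducible ϖ) {m : ℕ}
    (hm : Associated (ϖ ^ m) (algebraMap (integralClosure ℤ_[p] K) (integralClosure ℤ_[p] L) π)) :
    Nat.card (ResidueField (integralClosure ℤ_[p] L)) ^ m =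
      Nat.card (ResidueField (integralClosure ℤ_[p] K)) ^ Module.finrank K L := by
  obtain ⟨e, he⟩ := IsDiscreteValuationRing.associated_pow_irreducible
    (natCast_prime_integralClosure_ne_zero (p := p) (F := K)) hπ
  have he₀ : e ≠ 0 := by
    rintro rfl
    rw [pow_zero, associated_one_iff_isUnit] at he
    exact not_isUnit_natCast_prime_integralClosure he
  have hme : Associated (ϖ ^ (m * e)) (p : integralClosure ℤ_[p] L) := by
    have h := he.symm.map (algebraMap (integralClosure ℤ_[p] K) (integralClosure ℤ_[p] L))
    rw [map_natCast, map_pow] at h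
    exact pow_mul ϖ m e ▸ (hm.pow_pow (n := e)).trans h
  refine Nat.pow_left_injective he₀ ?_
  change (_ ^ m) ^ e = (_ ^ Module.finrank K L) ^ e
  rw [← pow_mul, natCard_residueField_integralClosure_pow hϖ hme, pow_right_comm,
    natCard_residueField_integralClosure_pow hπ he.symm, ← pow_mul, Module.finrank_mul_finrank]

theorem nonempty_powClassRep_padic_equiv [IsGalois K L] {t : ℕ} (ht : ¬ p ∣ t)
    (hfix : ∀ σ : L ≃ₐ[K] L, (∀ x : L, σ (x ^ t) = x ^ t → σ x = x) → σ = 1) {lam : L}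
    (hlam : lam ^ (p - 1) = -(p : L)) :
    Nonempty ((powClassRep p (L ≃ₐ[K] L) Lˣ).asModule ≃ₗ[MonoidAlgebra (ZMod p) (L ≃ₐ[K] L)]
      (rootsOfUnityRep p (L ≃ₐ[K] L) L).asModule ×
        (Fin (Module.finrank ℚ_[p] K) → MonoidAlgebra (ZMod p) (L ≃ₐ[K] L)) ×
          (Representation.trivial (ZMod p) (L ≃ₐ[K] L) (ZMod p)).asModule) := by
  have := FiniteDimensional.right ℚ_[p] K L
  let _ : SMulCommClass (L ≃ₐ[K] L) ℤ_[p] L :=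
    ⟨fun σ r x ↦ map_smul (σ.restrictScalars ℤ_[p]) r x⟩
  let _ : SMulCommClass (L ≃ₐ[K] L) (integralClosure ℤ_[p] K) (integralClosure ℤ_[p] L) :=
    ⟨fun σ r x ↦ Subtype.ext ((map_mul σ _ _).trans (congrArg (· * _) (σ.commutes r)))⟩
  have := integralClosure.isFractionRing_of_finite_extension (A := ℤ_[p]) ℚ_[p] L
  have ht' : (t : ResidueField (integralClosure ℤ_[p] L)) ≠ 0 :=
    (CharP.cast_eq_zero_iff _ p t).not.2 ht
  have hlamO : IsIntegral ℤ_[p] lam :=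
    .of_pow (Nat.sub_pos_of_lt (Fact.out : p.Prime).one_lt)
      (hlam ▸ (map_natCast (algebraMap ℤ_[p] L) p ▸ isIntegral_algebraMap).neg)
  obtain ⟨ϖ, hϖ⟩ := IsDiscreteValuationRing.exists_irreducible (integralClosure ℤ_[p] L)
  obtain ⟨π, hπ⟩ := IsDiscreteValuationRing.exists_irreducible (integralClosure ℤ_[p] K)
  have hI := fun g hg hgϖ ↦ eq_one_of_mem_ker_of_residueCocycle_eq_one hϖ (G := L ≃ₐ[K] L) (L := L)
    (fun _ _ ↦ rfl) ht' hfix (g := g) hg hgϖ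
  have hπ₀ : algebraMap (integralClosure ℤ_[p] K) (integralClosure ℤ_[p] L) π ≠ 0 := fun h ↦
    hπ.ne_zero (Subtype.ext ((map_eq_zero (algebraMap K L)).1 (congrArg Subtype.val h)))
  obtain ⟨m, hm⟩ := IsDiscreteValuationRing.associated_pow_irreducible hπ₀ hϖ
  refine nonempty_powClassRep_fractionField_equiv (A := integralClosure ℤ_[p] L) (fun _ _ ↦ rfl)
    natCast_prime_integralClosure_ne_zero hϖ (lam := ⟨lam, hlamO⟩) (Subtype.ext hlam) hI
    (fun e he ↦ ?_) (fun σ ↦ Subtype.ext (σ.commutes _)) hm.symm ?_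
  · rw [natCard_residueField_integralClosure_pow hϖ he, IsGalois.card_aut_eq_finrank,
      Module.finrank_mul_finrank]
  · refine coprime_of_natCard_residueField_pow_eq hϖ (R := integralClosure ℤ_[p] K) hI ?_
    rw [natCard_residueField_integralClosure_pow_eq hπ hϖ hm.symm, IsGalois.card_aut_eq_finrank]

end PadicTower

section EquivariantEquiv

open Representation

theorem exists_addEquiv_of_powClassRep_equiv {p d : ℕ} {G L : Type*} [Group G] [CommRing L]
    [MulSemiringAction G L]
    (f : (powClassRep p G Lˣ).asModule ≃ₗ[MonoidAlgebra (ZMod p) G]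
      (rootsOfUnityRep p G L).asModule × (Fin d → MonoidAlgebra (ZMod p) G) ×
        (trivial (ZMod p) G (ZMod p)).asModule) :
    ∃ e : PowClass p Lˣ ≃+
        Additive (rootsOfUnity p L) × (Fin d → MonoidAlgebra (ZMod p) G) × ZMod p,
      ∀ (g : G) (u : Lˣ),
        ((e (powClass p (.ofMul (g • u)))).1.toMul : Lˣ) =
            g • ((e (powClass p (.ofMul u))).1.toMul : Lˣ) ∧
        (∀ i, (e (powClass p (.ofMul (g • u)))).2.1 i =
            MonoidAlgebra.single g 1 * (e (powClass p (.ofMul u))).2.1 i) ∧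
        (e (powClass p (.ofMul (g • u)))).2.2 = (e (powClass p (.ofMul u))).2.2 := by
  refine ⟨f.toAddEquiv, fun g u ↦ ?_⟩
  let x : (powClassRep p G Lˣ).asModule := powClass p (.ofMul u)
  have hf : f (powClassRep p G Lˣ g x) = MonoidAlgebra.single g (1 : ZMod p) • f x := by
    rw [← map_smul, single_one_smul]
  refine ⟨?_, congrFun (congrArg (fun y ↦ y.2.1) hf), ?_⟩
  · have hroot : (f (powClassRep p G Lˣ g x)).1 = rootsOfUnityRep p G L g (f x).1 :=
      (congrArg Prod.fst hf).trans (single_one_smul _ g _)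
    exact (congrArg (fun ω : Additive (rootsOfUnity p L) ↦ (ω.toMul : Lˣ)) hroot).trans
      (Units.ext rfl)
  · exact (congrArg (fun y ↦ y.2.2) hf).trans (single_one_smul _ g _)

end EquivariantEquiv

section PadicKummer

open IntermediateField

variable {p : ℕ} [Fact p.Prime] {K : Type*} {Ω : Type u} [Field K] [Field Ω] [Algebra ℚ_[p] K]
  [FiniteDimensional ℚ_[p] K]

theorem finite_quotient_range_powMonoidHom_of_padic {t : ℕ} (ht : ¬ p ∣ t) :
    Finite (Kˣ ⧸ (powMonoidHom t : Kˣ →* Kˣ).range) := by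
  let _ : Algebra ℤ_[p] K := Algebra.compHom K (algebraMap ℤ_[p] ℚ_[p])
  have : IsScalarTower ℤ_[p] ℚ_[p] K := .of_algebraMap_eq' rfl
  have := integralClosure.isFractionRing_of_finite_extension (A := ℤ_[p]) ℚ_[p] K
  exact finite_quotient_range_powMonoidHom (A := integralClosure ℤ_[p] K)
    ((CharP.cast_eq_zero_iff _ p t).not.2 ht)

variable [Algebra ℚ_[p] Ω] [Algebra K Ω] [IsScalarTower ℚ_[p] K Ω] [IsAlgClosure ℚ_[p] Ω]

theorem finiteDimensional_and_isGalois_kummerExtension {t : ℕ} (ht : ¬ p ∣ t) {ζ : Ω}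
    (hζ : IsPrimitiveRoot ζ t) {E : IntermediateField K Ω} (hE : E = adjoin K {ζ}) :
    FiniteDimensional K (kummerExtension E t) ∧ IsGalois K (kummerExtension E t) := by
  have ht₀ : t ≠ 0 := fun h ↦ ht (h ▸ dvd_zero p)
  have : NeZero t := ⟨ht₀⟩
  have : CharZero K := charZero_of_injective_algebraMap (algebraMap ℚ_[p] K).injective
  have := IsAlgClosure.isAlgClosed (R := ℚ_[p]) (K := Ω)
  have := IsAlgClosure.isAlgebraic (R := ℚ_[p]) (K := Ω)
  have : Algebra.IsAlgebraic K Ω := Algebra.IsAlgebraic.tower_top (K := ℚ_[p]) K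
  have : IsAlgClosure K Ω := ⟨inferInstance, inferInstance⟩
  have : Normal K Ω := IsAlgClosure.normal K Ω
  have : IsCyclotomicExtension {t} K E :=
    hE ▸ hζ.intermediateField_adjoin_isCyclotomicExtension K
  have : FiniteDimensional K E := IsCyclotomicExtension.finiteDimensional {t} K E
  have : IsGalois K E := IsCyclotomicExtension.isGalois {t} K E
  have : FiniteDimensional ℚ_[p] E := .trans ℚ_[p] K E
  have := finite_quotient_range_powMonoidHom_of_padic (K := E) ht
  have := normal_kummerExtension (E := E) (t := t)
  exact ⟨finiteDimensional_kummerExtension ht₀, ⟨⟩⟩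

theorem nonempty_powClassRep_kummerExtension_equiv {t : ℕ} (ht : ¬ p ∣ t) (hdvd : p - 1 ∣ t)
    {ζ : Ω} (hζ : IsPrimitiveRoot ζ t) {E L : IntermediateField K Ω} (hE : E = adjoin K {ζ})
    (hL : L = kummerExtension E t) :
    Nonempty ((powClassRep p (L ≃ₐ[K] L) Lˣ).asModule ≃ₗ[MonoidAlgebra (ZMod p) (L ≃ₐ[K] L)]
      (rootsOfUnityRep p (L ≃ₐ[K] L) L).asModule ×
        (Fin (Module.finrank ℚ_[p] K) → MonoidAlgebra (ZMod p) (L ≃ₐ[K] L)) ×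
          (Representation.trivial (ZMod p) (L ≃ₐ[K] L) (ZMod p)).asModule) := by
  subst hL
  have := IsAlgClosure.isAlgClosed (R := ℚ_[p]) (K := Ω)
  obtain ⟨_, _⟩ := finiteDimensional_and_isGalois_kummerExtension ht hζ hE
  have : FiniteDimensional ℚ_[p] (kummerExtension E t) := .trans ℚ_[p] K _
  have hfix (σ : kummerExtension E t ≃ₐ[K] kummerExtension E t) :=
    eq_one_of_forall_apply_pow_eq (σ := σ) hE (by simpa using hζ.pow_eq_one)
  obtain ⟨lam, hlam⟩ := IsAlgClosed.exists_pow_nat_eq (-(p : Ω))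
    (Nat.sub_pos_of_lt (Fact.out : p.Prime).one_lt)
  have hlamE : lam ^ t ∈ E := by
    obtain ⟨s, rfl⟩ := hdvd
    exact pow_mul lam _ s ▸ hlam ▸ pow_mem (neg_mem (_root_.natCast_mem E p)) s
  let _ : Algebra ℤ_[p] K := Algebra.compHom K (algebraMap ℤ_[p] ℚ_[p])
  let _ : Algebra ℤ_[p] (kummerExtension E t) :=
    Algebra.compHom _ (algebraMap ℤ_[p] ℚ_[p])
  have : IsScalarTower ℤ_[p] ℚ_[p] K := .of_algebraMap_eq' rfl
  have : IsScalarTower ℤ_[p] ℚ_[p] (kummerExtension E t) := .of_algebraMap_eq' rfl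
  have : IsScalarTower ℤ_[p] K (kummerExtension E t) := .to₁₃₄ _ ℚ_[p] _ _
  exact nonempty_powClassRep_padic_equiv ht hfix
    (lam := ⟨lam, mem_kummerExtension_of_pow_mem hlamE⟩) (Subtype.ext (by simpa using hlam))

end PadicKummer

theorem not_dvd_pow_sub_one {p n : ℕ} (hp : p.Prime) (hn : n ≠ 0) : ¬ p ∣ p ^ n - 1 := fun h ↦
  hp.one_lt.ne' <| Nat.dvd_one.1 <|
    (Nat.dvd_sub_iff_right (Nat.one_le_pow _ _ hp.pos) (dvd_pow_self p hn)).1 h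

theorem stmt_18_general (p : ℕ) [Fact p.Prime] {t : ℕ} (ht : ¬ p ∣ t) (hdvd : p - 1 ∣ t)
    (Ω : Type u) [Field Ω] [Algebra ℚ_[p] Ω] [IsAlgClosure ℚ_[p] Ω]
    (K : IntermediateField ℚ_[p] Ω) [FiniteDimensional ℚ_[p] ↥K]
    (d : ℕ) (hd : d = Module.finrank ℚ_[p] ↥K)
    (ζ : Ω) (hζ : IsPrimitiveRoot ζ t)
    (E : IntermediateField ↥K Ω) (hE : E = IntermediateField.adjoin ↥K {ζ})
    (L : IntermediateField ↥K Ω)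
    (hL : L = E ⊔ IntermediateField.adjoin ↥K {x : Ω | x ^ t ∈ E}) :
    ∃ e : Additive ((↥L)ˣ ⧸ (powMonoidHom p : (↥L)ˣ →* (↥L)ˣ).range) ≃+
        (Additive ↥(rootsOfUnity p ↥L) ×
          (Fin d → MonoidAlgebra (ZMod p) (↥L ≃ₐ[↥K] ↥L)) × ZMod p),
      ∀ (σ : ↥L ≃ₐ[↥K] ↥L) (x : (↥L)ˣ),
        (((e (Additive.ofMul (QuotientGroup.mk (Units.map (σ : ↥L →* ↥L) x)))).1.toMul :
            ↥(rootsOfUnity p ↥L)) : (↥L)ˣ) =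
          Units.map (σ : ↥L →* ↥L)
            (((e (Additive.ofMul (QuotientGroup.mk x))).1.toMul :
              ↥(rootsOfUnity p ↥L)) : (↥L)ˣ) ∧
        (∀ i : Fin d,
          (e (Additive.ofMul (QuotientGroup.mk (Units.map (σ : ↥L →* ↥L) x)))).2.1 i =
            MonoidAlgebra.single σ (1 : ZMod p) *
              (e (Additive.ofMul (QuotientGroup.mk x))).2.1 i) ∧
        (e (Additive.ofMul (QuotientGroup.mk (Units.map (σ : ↥L →* ↥L) x)))).2.2 =
          (e (Additive.ofMul (QuotientGroup.mk x))).2.2 := by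
  subst hd
  obtain ⟨f⟩ := nonempty_powClassRep_kummerExtension_equiv ht hdvd hζ hE
    (hL.trans sup_adjoin_pow_mem_eq_kummerExtension)
  exact exists_addEquiv_of_powClassRep_equiv f

/-- Let `K ⊆ Ω` be a finite extension of `ℚ_p` of degree `d`, and let `L_n`, `G_n` be as
usual.  Then there is an isomorphism of `𝔽_p[G_n]`-modules
`L_n^× / (L_n^×)^p ≃ μ_p(L_n) ⊕ 𝔽_p[G_n]^d ⊕ 𝔽_p`: an isomorphism of additive groups
(the left side written multiplicatively, so wrapped in `Additive`) commuting with the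
`G_n`-actions — the Galois action on the left, and on the right the natural action on
`μ_p(L_n)`, left multiplication on each copy of the group algebra `𝔽_p[G_n]`, and the
trivial action on `𝔽_p`. -/
theorem stmt_18 (p : ℕ) [hp : Fact p.Prime] (n : ℕ) (hn : 1 ≤ n)
    (Ω : Type) [Field Ω] [Algebra ℚ_[p] Ω] [IsAlgClosure ℚ_[p] Ω]
    (K : IntermediateField ℚ_[p] Ω) [FiniteDimensional ℚ_[p] ↥K]
    (d : ℕ) (hd : d = Module.finrank ℚ_[p] ↥K)
    (ζ : Ω) (hζ : IsPrimitiveRoot ζ (p ^ n - 1))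
    (Kn : IntermediateField ↥K Ω) (hKn : Kn = IntermediateField.adjoin ↥K {ζ})
    (Ln : IntermediateField ↥K Ω)
    (hLn : Ln = Kn ⊔ IntermediateField.adjoin ↥K {x : Ω | x ^ (p ^ n - 1) ∈ Kn}) :
    ∃ e : Additive ((↥Ln)ˣ ⧸ (powMonoidHom p : (↥Ln)ˣ →* (↥Ln)ˣ).range) ≃+
        (Additive ↥(rootsOfUnity p ↥Ln) ×
          (Fin d → MonoidAlgebra (ZMod p) (↥Ln ≃ₐ[↥K] ↥Ln)) × ZMod p),
      ∀ (σ : ↥Ln ≃ₐ[↥K] ↥Ln) (x : (↥Ln)ˣ),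
        (((e (Additive.ofMul (QuotientGroup.mk (Units.map (σ : ↥Ln →* ↥Ln) x)))).1.toMul :
            ↥(rootsOfUnity p ↥Ln)) : (↥Ln)ˣ) =
          Units.map (σ : ↥Ln →* ↥Ln)
            (((e (Additive.ofMul (QuotientGroup.mk x))).1.toMul :
              ↥(rootsOfUnity p ↥Ln)) : (↥Ln)ˣ) ∧
        (∀ i : Fin d,
          (e (Additive.ofMul (QuotientGroup.mk (Units.map (σ : ↥Ln →* ↥Ln) x)))).2.1 i =
            MonoidAlgebra.single σ (1 : ZMod p) *
              (e (Additive.ofMul (QuotientGroup.mk x))).2.1 i) ∧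
        (e (Additive.ofMul (QuotientGroup.mk (Units.map (σ : ↥Ln →* ↥Ln) x)))).2.2 =
          (e (Additive.ofMul (QuotientGroup.mk x))).2.2 := by
  exact stmt_18_general p (not_dvd_pow_sub_one hp.out (Nat.one_le_iff_ne_zero.1 hn))
    (by simpa using Nat.sub_dvd_pow_sub_pow p 1 n) Ω K d hd ζ hζ Kn hKn Ln hLn
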